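/- arXiv:1309.2438 — 4 statements merged into one kernel-verified Lean document; each statement's English description precedes it below -/
import Mathlib

section
/- Let G be a finite group and c ∈ Z²(G, ℂ*) non-degenerate. Then any subgroup H < G that is isotropic with respect to [c] has order dividing √|G|. -/
/-- The value `c 1 x` of a cocycle is constant. -/
lemma cocycle_one_left {G : Type*} [Group G] (c : G → G → ℂˣ)
    (hc : ∀ g h k : G, c g h * c (g * h) k = c h k * c g (h * k)) (x : G) :
    c 1 x = c 1 1 := by
  have h := hc 1 1 x
  simp only [one_mul] at h
  exact (mul_right_cancel h).symm

/-- The twisted regular representation. -/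
noncomputable def twReg {G : Type*} [Group G] (c : G → G → ℂˣ) (g : G) :
    Module.End ℂ (G → ℂ) where
  toFun φ := fun x => (c g (g⁻¹ * x) : ℂ) * φ (g⁻¹ * x)
  map_add' φ ψ := by ext x; simp [mul_add]
  map_smul' a φ := by ext x; simp [mul_left_comm]

lemma twReg_mul {G : Type*} [Group G] (c : G → G → ℂˣ)
    (hc : ∀ g h k : G, c g h * c (g * h) k = c h k * c g (h * k)) (g h : G) :
    twReg c g * twReg c h = (c g h : ℂ) • twReg c (g * h) := by
  ext1 φ
  funext x
  have h1 := hc g h (h⁻¹ * (g⁻¹ * x))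
  rw [mul_inv_cancel_left] at h1
  have h2 := congrArg (Units.val) h1
  simp only [Units.val_mul] at h2
  simp only [Module.End.mul_apply, LinearMap.smul_apply, Pi.smul_apply, smul_eq_mul, twReg,
    LinearMap.coe_mk, AddHom.coe_mk, mul_inv_rev, mul_assoc]
  linear_combination (-φ (h⁻¹ * (g⁻¹ * x))) * h2

lemma twReg_one {G : Type*} [Group G] (c : G → G → ℂˣ)
    (hc : ∀ g h k : G, c g h * c (g * h) k = c h k * c g (h * k)) :
    twReg c 1 = (c 1 1 : ℂ) • 1 := by
  ext1 φ
  funext x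
  simp [twReg, cocycle_one_left c hc x]

/-- Existence of an irreducible projective representation. -/
lemma exists_irred {G : Type*} [Group G] [Fintype G] (c : G → G → ℂˣ)
    (hc : ∀ g h k : G, c g h * c (g * h) k = c h k * c g (h * k)) :
    ∃ (W : Submodule ℂ (G → ℂ)) (ρ : G → Module.End ℂ W),
      Nontrivial W ∧ (∀ g h, ρ g * ρ h = (c g h : ℂ) • ρ (g * h)) ∧
      ρ 1 = (c 1 1 : ℂ) • 1 ∧
      ∀ S : Submodule ℂ W, (∀ g, ∀ x ∈ S, ρ g x ∈ S) → S = ⊥ ∨ S = ⊤ := by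
  classical
  let P : Set (Submodule ℂ (G → ℂ)) :=
    {S | S ≠ ⊥ ∧ ∀ g, ∀ x ∈ S, twReg c g x ∈ S}
  have hP : P.Nonempty := ⟨⊤, top_ne_bot, fun _ _ _ => Submodule.mem_top⟩
  obtain ⟨W, hW, hmin⟩ := wellFounded_lt.has_min P hP
  refine ⟨W, fun g => (twReg c g).restrict (hW.2 g), ?_, ?_, ?_, ?_⟩
  · exact Submodule.nontrivial_iff_ne_bot.2 hW.1
  · intro g h
    ext1 w
    apply Subtype.ext
    have := congrArg (fun t => t (w : G → ℂ)) (twReg_mul c hc g h)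
    simpa using this
  · ext1 w
    apply Subtype.ext
    have := congrArg (fun t => t (w : G → ℂ)) (twReg_one c hc)
    simpa using this
  · intro S hS
    by_cases h0 : S = ⊥
    · exact Or.inl h0
    right
    have hm : S.map W.subtype ∈ P := by
      refine ⟨?_, ?_⟩
      · intro hb
        apply h0
        apply Submodule.map_injective_of_injective W.injective_subtype
        rw [hb, Submodule.map_bot]
      · rintro g _ ⟨x, hx, rfl⟩
        exact ⟨_, hS g x hx, rfl⟩
    have hle : S.map W.subtype ≤ W := Submodule.map_subtype_le W S
    have heq : S.map W.subtype = W := by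
      by_contra hne
      exact hmin _ hm (lt_of_le_of_ne hle hne)
    apply Submodule.map_injective_of_injective W.injective_subtype
    rw [heq, Submodule.map_subtype_top]

/-- Schur's lemma. -/
lemma schur_scalar {G W : Type*} [AddCommGroup W] [Module ℂ W]
    [FiniteDimensional ℂ W] [Nontrivial W] (ρ : G → Module.End ℂ W)
    (hirr : ∀ S : Submodule ℂ W, (∀ g, ∀ x ∈ S, ρ g x ∈ S) → S = ⊥ ∨ S = ⊤)
    (T : Module.End ℂ W) (hT : ∀ g, T * ρ g = ρ g * T) : ∃ a : ℂ, T = a • 1 := by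
  obtain ⟨a, ha⟩ := Module.End.exists_eigenvalue T
  refine ⟨a, ?_⟩
  have h := hirr (T.eigenspace a) (by
    intro g x hx
    rw [Module.End.mem_eigenspace_iff] at hx ⊢
    have := congrArg (fun t => t x) (hT g)
    simp only [Module.End.mul_apply] at this
    rw [this, hx, map_smul])
  rcases h with h | h
  · exact absurd h ha
  · ext x
    have : x ∈ T.eigenspace a := h ▸ Submodule.mem_top
    rw [Module.End.mem_eigenspace_iff] at this
    simpa using this

lemma trace_zero {G W : Type*} [Group G] [AddCommGroup W] [Module ℂ W]
    (c : G → G → ℂˣ)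
    (hnd : ∀ x : G, x ≠ 1 → ∃ g : G, x * g = g * x ∧ c x g ≠ c g x)
    (ρ : G → Module.End ℂ W) (hu : ∀ g, IsUnit (ρ g))
    (hρ : ∀ g h, ρ g * ρ h = (c g h : ℂ) • ρ (g * h)) (x : G) (hx : x ≠ 1) :
    LinearMap.trace ℂ W (ρ x) = 0 := by
  obtain ⟨g, hg, hne⟩ := hnd x hx
  obtain ⟨u, hu⟩ := hu g
  have h1 : (c g x : ℂ) • (ρ x * ρ g) = (c x g : ℂ) • (ρ g * ρ x) := by
    rw [hρ, hρ, hg, smul_smul, smul_smul, mul_comm]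
  have h2 : (c g x : ℂ) • ρ x = (c x g : ℂ) • (ρ g * ρ x * (u⁻¹ : (Module.End ℂ W)ˣ)) := by
    have := congrArg (fun t => t * ((u⁻¹ : (Module.End ℂ W)ˣ) : Module.End ℂ W)) h1
    simp only [smul_mul_assoc] at this
    rw [← this, mul_assoc, ← hu, Units.mul_inv, mul_one]
  have h3 := congrArg (LinearMap.trace ℂ W) h2
  rw [map_smul, map_smul, LinearMap.trace_mul_comm, ← mul_assoc, ← hu, Units.inv_mul, one_mul,
    smul_eq_mul, smul_eq_mul] at h3
  have h4 : ((c g x : ℂ) - c x g) * LinearMap.trace ℂ W (ρ x) = 0 := by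
    rw [sub_mul, h3, sub_self]
  rcases mul_eq_zero.1 h4 with h | h
  · exact absurd (Units.ext (sub_eq_zero.1 h)).symm hne
  · exact h

lemma rho_isUnit {G W : Type*} [Group G] [AddCommGroup W] [Module ℂ W]
    (c : G → G → ℂˣ) (ρ : G → Module.End ℂ W)
    (hρ : ∀ g h, ρ g * ρ h = (c g h : ℂ) • ρ (g * h))
    (h1 : ρ 1 = (c 1 1 : ℂ) • 1) (g : G) : IsUnit (ρ g) := by
  have key : ∀ a b : G, a * b = 1 →
      ρ a * ρ b = ((c a b * c 1 1 : ℂˣ) : ℂ) • (1 : Module.End ℂ W) := by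
    intro a b hab
    rw [hρ, hab, h1, smul_smul, Units.val_mul]
  rw [isUnit_iff_exists_and_exists]
  refine ⟨⟨((c g g⁻¹ * c 1 1 : ℂˣ) : ℂ)⁻¹ • ρ g⁻¹, ?_⟩,
    ⟨((c g⁻¹ g * c 1 1 : ℂˣ) : ℂ)⁻¹ • ρ g⁻¹, ?_⟩⟩
  · rw [mul_smul_comm, key _ _ (mul_inv_cancel g), smul_smul, inv_mul_cancel₀ (Units.ne_zero _),
      one_smul]
  · rw [smul_mul_assoc, key _ _ (inv_mul_cancel g), smul_smul, inv_mul_cancel₀ (Units.ne_zero _),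
      one_smul]

/-- Averaging over the group. -/
lemma avg_scalar {G W : Type*} [Group G] [Fintype G] [AddCommGroup W] [Module ℂ W]
    [FiniteDimensional ℂ W] [Nontrivial W]
    (c : G → G → ℂˣ) (ρ : G → Module.End ℂ W)
    (hρ : ∀ g h, ρ g * ρ h = (c g h : ℂ) • ρ (g * h))
    (σ : G → Module.End ℂ W) (hσ : ∀ g, σ g * ρ g = 1) (hσ' : ∀ g, ρ g * σ g = 1)
    (hirr : ∀ S : Submodule ℂ W, (∀ g, ∀ x ∈ S, ρ g x ∈ S) → S = ⊥ ∨ S = ⊤)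
    (T : Module.End ℂ W) :
    (Module.finrank ℂ W : ℂ) • ∑ g, σ g * T * ρ g =
      ((Fintype.card G : ℂ) * LinearMap.trace ℂ W T) • (1 : Module.End ℂ W) := by
  have hcomm : ∀ h, (∑ g, σ g * T * ρ g) * ρ h = ρ h * ∑ g, σ g * T * ρ g := by
    intro h
    rw [Finset.sum_mul, Finset.mul_sum,
      ← Equiv.sum_comp (Equiv.mulRight h) (fun g => ρ h * (σ g * T * ρ g))]
    refine Finset.sum_congr rfl fun g _ => ?_
    have e : ρ h * σ (g * h) = (c g h : ℂ) • σ g := by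
      calc ρ h * σ (g * h) = σ g * (ρ g * ρ h) * σ (g * h) := by
            rw [← mul_assoc (σ g), hσ, one_mul]
        _ = (c g h : ℂ) • σ g := by
            rw [hρ, mul_smul_comm, smul_mul_assoc, mul_assoc, hσ', mul_one]
    simp only [Equiv.coe_mulRight]
    rw [← mul_assoc, ← mul_assoc, e, mul_assoc, hρ]
    simp only [mul_smul_comm, smul_mul_assoc]
  obtain ⟨a, ha⟩ := schur_scalar ρ hirr _ hcomm
  have ht := congrArg (LinearMap.trace ℂ W) ha
  rw [map_sum, map_smul, LinearMap.trace_one] at ht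
  have : ∀ g ∈ Finset.univ, LinearMap.trace ℂ W (σ g * T * ρ g) = LinearMap.trace ℂ W T := by
    intro g _
    rw [LinearMap.trace_mul_comm, ← mul_assoc, hσ', one_mul]
  rw [Finset.sum_congr rfl this, Finset.sum_const, Finset.card_univ, nsmul_eq_mul,
    smul_eq_mul] at ht
  rw [ha, smul_smul, ht, mul_comm]

lemma sum_trace {G W : Type*} [Group G] [Fintype G] [AddCommGroup W] [Module ℂ W]
    [FiniteDimensional ℂ W] [Nontrivial W]
    (ρ σ : G → Module.End ℂ W)
    (havg : ∀ T : Module.End ℂ W, (Module.finrank ℂ W : ℂ) • ∑ g, σ g * T * ρ g =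
      ((Fintype.card G : ℂ) * LinearMap.trace ℂ W T) • (1 : Module.End ℂ W)) :
    ∑ g, LinearMap.trace ℂ W (ρ g) * LinearMap.trace ℂ W (σ g) = Fintype.card G := by
  classical
  let b := Module.finBasis ℂ W
  have hn : (Module.finrank ℂ W : ℂ) ≠ 0 := by
    exact_mod_cast (Module.finrank_pos (R := ℂ) (M := W)).ne'
  have tr : ∀ A : Module.End ℂ W, LinearMap.trace ℂ W A = ∑ i, b.repr (A (b i)) i := by
    intro A
    rw [LinearMap.trace_eq_matrix_trace ℂ b, Matrix.trace]
    simp [LinearMap.toMatrix_apply]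
  have key : ∀ i j, (Module.finrank ℂ W : ℂ) *
      ∑ g, b.repr (ρ g (b i)) i * b.repr (σ g (b j)) j =
      if i = j then (Fintype.card G : ℂ) else 0 := by
    intro i j
    have h := congrArg (fun t => b.repr (t (b i)) j)
      (havg ((b.coord i).smulRight (b j)))
    simp only [LinearMap.trace_smulRight] at h
    simp only [LinearMap.smul_apply, LinearMap.sum_apply, Module.End.mul_apply, map_smul, map_sum,
      Finsupp.smul_apply, Finsupp.finsetSum_apply, LinearMap.smulRight_apply, smul_eq_mul,
      Module.Basis.coord_apply, Module.End.one_apply, Module.Basis.repr_self] at h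
    rw [h]
    simp only [Finsupp.single_apply]
    by_cases hij : i = j
    · simp [hij]
    · simp [hij]
  apply mul_left_cancel₀ hn
  calc (Module.finrank ℂ W : ℂ) * ∑ g, LinearMap.trace ℂ W (ρ g) * LinearMap.trace ℂ W (σ g)
      = ∑ i, ∑ j, (Module.finrank ℂ W : ℂ) *
          ∑ g, b.repr (ρ g (b i)) i * b.repr (σ g (b j)) j := by
        simp_rw [← Finset.mul_sum (a := (Module.finrank ℂ W : ℂ)), tr, Finset.sum_mul_sum]
        rw [Finset.sum_comm]
        congr 1
        exact Finset.sum_congr rfl fun i _ => Finset.sum_comm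
    _ = (Module.finrank ℂ W : ℂ) * Fintype.card G := by
        simp [key]

lemma card_dvd {G W : Type*} [Group G] [Fintype G] [AddCommGroup W] [Module ℂ W]
    [FiniteDimensional ℂ W] (c : G → G → ℂˣ) (ρ : G → Module.End ℂ W)
    (hρ : ∀ g h, ρ g * ρ h = (c g h : ℂ) • ρ (g * h))
    (h1 : ρ 1 = (c 1 1 : ℂ) • 1)
    (htr : ∀ x, x ≠ 1 → LinearMap.trace ℂ W (ρ x) = 0)
    (H : Subgroup G) (f : H → ℂˣ)
    (hf : ∀ a b : H, c (a : G) (b : G) = f a * f b * (f (a * b))⁻¹) :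
    Nat.card H ∣ Module.finrank ℂ W := by
  classical
  have hcard : (Nat.card H : ℂ) ≠ 0 := by exact_mod_cast Nat.card_pos.ne'
  have hc1 : c 1 1 = f 1 := by simpa using hf 1 1
  set s : Module.End ℂ W := ∑ h : H, ((f h)⁻¹ : ℂˣ).val • ρ h with hs
  have hss : s * s = (Nat.card H : ℂ) • s := by
    have step : ∀ h : H, (((f h)⁻¹ : ℂˣ).val • ρ h) * s = s := by
      intro h
      rw [hs, Finset.mul_sum, ← Equiv.sum_comp (Equiv.mulLeft h)
        (fun k : H => ((f k)⁻¹ : ℂˣ).val • ρ k)]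
      refine Finset.sum_congr rfl fun k _ => ?_
      rw [smul_mul_smul_comm, hρ, smul_smul, hf, ← Units.val_mul, ← Units.val_mul]
      congr 2
      simp only [Equiv.coe_mulLeft]
      rw [← mul_inv, mul_comm (f h), mul_comm (f k), inv_mul_cancel_left]
    conv_lhs => rw [hs, Finset.sum_mul]
    rw [← hs, Finset.sum_congr rfl (fun h _ => step h), Finset.sum_const, Finset.card_univ,
      Nat.card_eq_fintype_card, Nat.cast_smul_eq_nsmul]
  have hid : IsIdempotentElem ((Nat.card H : ℂ)⁻¹ • s) := by
    rw [IsIdempotentElem, smul_mul_smul_comm, hss, smul_smul, mul_assoc,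
      inv_mul_cancel₀ hcard, mul_one]
  have hts : LinearMap.trace ℂ W s = Module.finrank ℂ W := by
    rw [hs, map_sum, Finset.sum_eq_single 1]
    · rw [map_smul, OneMemClass.coe_one, h1, map_smul, LinearMap.trace_one, hc1]
      simp
    · intro h _ hne
      rw [map_smul, htr _ (by simpa using hne), smul_zero]
    · simp
  have h := (LinearMap.IsIdempotentElem.isProj_range _ hid).trace
  rw [map_smul, hts, smul_eq_mul, inv_mul_eq_iff_eq_mul₀ hcard] at h
  exact ⟨_, by exact_mod_cast h⟩



/-- If `c ∈ Z²(G, ℂ*)` is non-degenerate, then any subgroup `H < G`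
isotropic with respect to `[c]` (restriction is a coboundary) has order dividing
`√|G|` (in particular `|G|` is a perfect square). -/
theorem isotropic_order_divides_sqrt
    {G : Type*} [Group G] [Fintype G]
    (c : G → G → ℂˣ)
    (hc : ∀ g h k : G, c g h * c (g * h) k = c h k * c g (h * k))
    (hnd : ∀ x : G, x ≠ 1 → ∃ g : G, x * g = g * x ∧ c x g ≠ c g x)
    (H : Subgroup G)
    (hres : ∃ f : H → ℂˣ, ∀ a b : H, c (a : G) (b : G) = f a * f b * (f (a * b))⁻¹) :
    ∃ n : ℕ, Fintype.card G = n ^ 2 ∧ Nat.card H ∣ n := by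
  classical
  obtain ⟨f, hf⟩ := hres
  obtain ⟨W, ρ, hnt, hρ, h1, hirr⟩ := exists_irred c hc
  have hu := rho_isUnit c ρ hρ h1
  have htr := trace_zero c hnd ρ hu hρ
  refine ⟨Module.finrank ℂ W, ?_, card_dvd c ρ hρ h1 htr H f hf⟩
  choose u hu' using hu
  let σ : G → Module.End ℂ W := fun g => ((u g)⁻¹ : (Module.End ℂ W)ˣ)
  have hσ : ∀ g, σ g * ρ g = 1 := fun g => by rw [← hu']; exact Units.inv_mul _
  have hσ' : ∀ g, ρ g * σ g = 1 := fun g => by rw [← hu']; exact Units.mul_inv _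
  have hsum := sum_trace ρ σ (avg_scalar c ρ hρ σ hσ hσ' hirr)
  rw [Finset.sum_eq_single 1 (fun g _ hg => by rw [htr g hg, zero_mul]) (by simp)] at hsum
  have hs1 : (c 1 1 : ℂ) • σ 1 = 1 := by
    have := hσ 1
    rwa [h1, mul_smul_comm, mul_one] at this
  have ht := congrArg (LinearMap.trace ℂ W) hs1
  rw [map_smul, LinearMap.trace_one, smul_eq_mul] at ht
  rw [h1, map_smul, LinearMap.trace_one, smul_eq_mul, mul_right_comm, ht] at hsum
  rw [sq]
  exact_mod_cast hsum.symm
end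

section
/- Let G be a nilpotent finite group with |G| ≥ n², where n divides the order of G appropriately (i.e., n² divides |G| as a product over primes). Then for any [c] ∈ H²(G, ℂ*) and any n with n² ≤ |G| and n a product of prime powers dividing the corresponding Sylow orders, [c] admits an isotropic subgroup H < G with |H| = n. In particular, a non-degenerate class over a nilpotent group admits a Lagrangian, i.e., an isotropic subgroup of order √|G|. -/
universe u

set_option linter.style.haveILetI false

namespace NilIso

theorem normal_of_le_center' {G : Type*} [Group G] {H : Subgroup G} (h : H ≤ Subgroup.center G) :
    H.Normal := by
  refine ⟨fun x hx g => ?_⟩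
  rw [Subgroup.mem_center_iff.1 (h hx) g, mul_inv_cancel_right]
  exact hx

theorem exists_central_prime (G : Type*) [Group G] [Finite G] [Group.IsNilpotent G] [Nontrivial G] :
    ∃ z : G, ∃ p : ℕ, p.Prime ∧ orderOf z = p ∧ ∀ g : G, g * z = z * g := by
  have hne := Group.IsNilpotent.center_ne_bot (G := G)
  have h1 : Nat.card (Subgroup.center G) ≠ 1 := by
    intro h
    exact hne (Subgroup.eq_bot_of_card_eq _ h)
  obtain ⟨p, hp, hpd⟩ := Nat.exists_prime_and_dvd h1
  haveI : Fact p.Prime := ⟨hp⟩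
  obtain ⟨z, hz⟩ := exists_prime_orderOf_dvd_card' p hpd
  refine ⟨z, p, hp, ?_, fun g => Subgroup.mem_center_iff.1 z.2 g⟩
  rw [Subgroup.orderOf_coe, hz]

theorem zpowers_normal_of_central {G : Type*} [Group G] (z : G) (hz : ∀ g : G, g * z = z * g) :
    (Subgroup.zpowers z).Normal := by
  apply normal_of_le_center'
  rw [Subgroup.zpowers_le]
  exact Subgroup.mem_center_iff.2 hz

theorem card_comap_mk {G : Type*} [Group G] [Finite G] (Z : Subgroup G) [Z.Normal]
    (M : Subgroup (G ⧸ Z)) :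
    Nat.card (M.comap (QuotientGroup.mk' Z)) = Nat.card Z * Nat.card M := by
  have h1 := Subgroup.card_mul_index (M.comap (QuotientGroup.mk' Z))
  rw [Subgroup.index_comap_of_surjective _ (QuotientGroup.mk'_surjective Z)] at h1
  have h2 := Subgroup.card_mul_index M
  have h3 := Subgroup.card_eq_card_quotient_mul_card_subgroup Z
  have h4 : 0 < M.index := Nat.pos_of_ne_zero Subgroup.index_ne_zero_of_finite
  apply Nat.eq_of_mul_eq_mul_right h4
  rw [h1, h3, ← h2]
  ring

theorem exists_subgroup_card (N : ℕ) : ∀ (G : Type u) [Group G] [Finite G] [Group.IsNilpotent G],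
    Nat.card G = N → ∀ n, n ∣ N → ∃ H : Subgroup G, Nat.card H = n := by
  induction N using Nat.strong_induction_on with
  | _ N ih =>
  intro G _ _ _ hN n hn
  rcases subsingleton_or_nontrivial G with hs | hs
  · have : N = 1 := by rw [← hN]; simp
    subst this
    have : n = 1 := Nat.dvd_one.1 hn
    exact ⟨⊥, by simp [this]⟩
  obtain ⟨z, p, hp, hzp, hz⟩ := exists_central_prime G
  haveI := zpowers_normal_of_central z hz
  set Z := Subgroup.zpowers z with hZ
  have hcZ : Nat.card Z = p := by rw [hZ, Nat.card_zpowers, hzp]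
  have h3 := Subgroup.card_eq_card_quotient_mul_card_subgroup Z
  rw [hcZ, hN] at h3
  have hpos : 0 < Nat.card (G ⧸ Z) := Nat.card_pos
  have hlt : Nat.card (G ⧸ Z) < N := by
    have := hp.two_le
    nlinarith
  by_cases hpn : p ∣ n
  · obtain ⟨n', rfl⟩ := hpn
    have : n' ∣ Nat.card (G ⧸ Z) := by
      rw [h3, mul_comm] at hn
      exact Nat.dvd_of_mul_dvd_mul_right hp.pos hn
    obtain ⟨M, hM⟩ := ih _ hlt (G ⧸ Z) rfl n' this
    exact ⟨M.comap (QuotientGroup.mk' Z), by rw [card_comap_mk, hcZ, hM]⟩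
  · have hco : Nat.Coprime p n := (Nat.Prime.coprime_iff_not_dvd hp).2 hpn
    have : n ∣ Nat.card (G ⧸ Z) := by
      rw [h3] at hn
      exact hco.symm.dvd_of_dvd_mul_right hn
    obtain ⟨M', hM'⟩ := ih _ hlt (G ⧸ Z) rfl n this
    set M := M'.comap (QuotientGroup.mk' Z) with hMdef
    have hM : Nat.card M = p * n := by rw [hMdef, card_comap_mk, hcZ, hM']
    have hZM : Z ≤ M := by
      intro x hx
      rw [hMdef, Subgroup.mem_comap]
      have : QuotientGroup.mk' Z x = 1 := by
        rw [← MonoidHom.mem_ker, QuotientGroup.ker_mk']; exact hx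
      rw [this]; exact M'.one_mem
    have hc1 : Nat.card (Z.subgroupOf M) = p := by
      rw [Nat.card_congr (Subgroup.subgroupOfEquivOfLe hZM).toEquiv, hcZ]
    have hi : (Z.subgroupOf M).index = n := by
      have := Subgroup.card_mul_index (Z.subgroupOf M)
      rw [hc1, hM] at this
      exact Nat.eq_of_mul_eq_mul_left hp.pos this
    obtain ⟨K, hK⟩ := Subgroup.exists_right_complement'_of_coprime (N := Z.subgroupOf M)
      (by rw [hc1, hi]; exact hco)
    have hK2 := hK.card_mul_card
    rw [hc1, hM] at hK2
    refine ⟨K.map M.subtype, ?_⟩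
    rw [Nat.card_congr (Subgroup.equivMapOfInjective K _ M.subtype_injective).toEquiv.symm]
    exact Nat.eq_of_mul_eq_mul_left hp.pos hK2

/-- `x` and `g` commute up to the scalar `a`. -/
def R {E : Type*} [Group E] (ι : ℂˣ →* E) (x : E) (a : ℂˣ) (g : E) : Prop :=
  x * g = ι a * (g * x)

section
variable {E : Type*} [Group E] {ι : ℂˣ →* E} (hcen : ∀ a e, ι a * e = e * ι a)
include hcen

theorem R.mul_right {x g h : E} {a b : ℂˣ} (h1 : R ι x a g) (h2 : R ι x b h) :
    R ι x (a * b) (g * h) := by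
  unfold R at *
  calc x * (g * h) = (x * g) * h := by group
    _ = ι a * (g * (x * h)) := by rw [h1]; group
    _ = ι a * ((g * ι b) * (h * x)) := by rw [h2]; group
    _ = _ := by rw [← hcen, map_mul]; group

theorem R.mul_left {x y g : E} {a b : ℂˣ} (h1 : R ι x a g) (h2 : R ι y b g) :
    R ι (x * y) (a * b) g := by
  unfold R at *
  calc x * y * g = x * (y * g) := by group
    _ = (x * ι b) * (g * y) := by rw [h2]; group
    _ = ι b * (x * g) * y := by rw [← hcen]; group
    _ = (ι b * ι a) * (g * (x * y)) := by rw [h1]; group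
    _ = _ := by rw [← map_mul, mul_comm b a]

omit hcen in
theorem R.one_right (x : E) : R ι x 1 1 := by simp [R]

theorem R.symm {x g : E} {a : ℂˣ} (h1 : R ι x a g) : R ι g a⁻¹ x := by
  unfold R at *
  rw [h1, ← mul_assoc, ← map_mul]; simp

theorem R.inv_right {x g : E} {a : ℂˣ} (h1 : R ι x a g) : R ι x a⁻¹ g⁻¹ := by
  unfold R at *
  have : g * x = ι a⁻¹ * (x * g) := by rw [h1, ← mul_assoc, ← map_mul]; simp
  calc x * g⁻¹ = g⁻¹ * (g * x) * g⁻¹ := by group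
    _ = (g⁻¹ * ι a⁻¹) * x := by rw [this]; group
    _ = _ := by rw [← hcen]; group

theorem R.pow_right {x g : E} {a : ℂˣ} (h1 : R ι x a g) (n : ℕ) : R ι x (a ^ n) (g ^ n) := by
  induction n with
  | zero => simpa using R.one_right x
  | succ n ih => rw [pow_succ, pow_succ]; exact R.mul_right hcen ih h1

theorem R.pow_left {x g : E} {a : ℂˣ} (h1 : R ι x a g) (n : ℕ) : R ι (x ^ n) (a ^ n) g := by
  have := R.symm hcen (R.pow_right hcen (R.symm hcen h1) n)
  simpa using this

theorem R.inv_left {x g : E} {a : ℂˣ} (h1 : R ι x a g) : R ι x⁻¹ a⁻¹ g := by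
  have := R.symm hcen (R.inv_right hcen (R.symm hcen h1))
  simpa using this

omit hcen in
theorem R.unique (hinj : Function.Injective ι) {x g : E} {a b : ℂˣ} (h1 : R ι x a g)
    (h2 : R ι x b g) : a = b := by
  unfold R at *
  rw [h1] at h2
  exact hinj (mul_right_cancel h2)

end

/-- Nondegeneracy of a central extension. -/
def Nondeg {E : Type*} [Group E] (ι : ℂˣ →* E) : Prop :=
  ∀ e : E, e ∉ ι.range → ∃ g : E, ∃ a : ℂˣ, a ≠ 1 ∧ R ι e a g

/-- The commutator character of an almost central element. -/
theorem exists_chi {E : Type*} [Group E] {ι : ℂˣ →* E} (hinj : Function.Injective ι)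
    (hcen : ∀ a e, ι a * e = e * ι a) (z : E) (hz : ∀ g, ∃ a, R ι z a g) :
    ∃ χ : E →* ℂˣ, ∀ g, R ι z (χ g) g := by
  choose f hf using hz
  refine ⟨MonoidHom.mk' f ?_, hf⟩
  intro g h
  exact R.unique hinj (hf _) (R.mul_right hcen (hf g) (hf h))

theorem root_pow {p : ℕ} (hp : p.Prime) {w a : ℂˣ} (hw : w ^ p = 1) (hw1 : w ≠ 1)
    (ha : a ^ p = 1) : ∃ i : ℕ, a = w ^ i := by
  haveI : Fact p.Prime := ⟨hp⟩
  haveI : NeZero p := ⟨hp.ne_zero⟩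
  have ho : orderOf w = p := orderOf_eq_prime hw hw1
  have hprim : IsPrimitiveRoot w p := ho ▸ IsPrimitiveRoot.orderOf w
  have h2 : IsPrimitiveRoot (w : ℂ) p := by
    rwa [IsPrimitiveRoot.coe_units_iff]
  obtain ⟨i, _, hi⟩ := h2.eq_pow_of_pow_eq_one (ξ := (a : ℂ)) (by rw [← Units.val_pow_eq_pow_val, ha]; simp)
  exact ⟨i, Units.ext (by simpa using hi.symm)⟩

/-- key step for nondegeneracy -/
theorem nondeg_key {E : Type*} [Group E] {ι : ℂˣ →* E} (hinj : Function.Injective ι)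
    (hcen : ∀ a e, ι a * e = e * ι a) (z : E) (χ : E →* ℂˣ) (hχ : ∀ g, R ι z (χ g) g)
    {p : ℕ} (hp : p.Prime) (hχp : ∀ g, χ g ^ p = 1) (hnd : Nondeg ι)
    (k : E) (hk : ∀ i : ℕ, k * (z ^ i)⁻¹ ∉ ι.range)
    (h : ∀ g a, χ g = 1 → R ι k a g → a = 1) : False := by
  obtain ⟨g0, a0, ha0, h0⟩ := hnd k (by simpa using hk 0)
  have hw1 : χ g0 ≠ 1 := fun h1 => ha0 (h g0 a0 h1 h0)
  have ha0p : a0 ^ p = 1 := h (g0 ^ p) _ (by rw [map_pow, hχp]) (R.pow_right hcen h0 p)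
  obtain ⟨i, hi⟩ := root_pow hp (hχp g0) hw1 ha0p
  obtain ⟨g, a, ha, hg⟩ := hnd _ (hk i)
  obtain ⟨j, hj⟩ := root_pow hp (hχp g0) hw1 (hχp g)
  have h1 := R.mul_left hcen hg (R.pow_left hcen (hχ g) i)
  rw [inv_mul_cancel_right] at h1
  have h2 := R.mul_right hcen h1 (R.inv_right hcen (R.pow_right hcen h0 j))
  have h3 := h _ _ (by rw [map_mul, map_inv, map_pow, hj, mul_inv_cancel]) h2
  apply ha
  rw [hj, hi, ← pow_mul, ← pow_mul, mul_comm j i, mul_inv_cancel_right] at h3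
  exact h3

theorem exists_z {E : Type*} [Group E] [Group.IsNilpotent E] {ι : ℂˣ →* E}
    (hcen : ∀ a e, ι a * e = e * ι a) (hN : ι.range.index ≠ 0) (hN1 : ι.range.index ≠ 1) :
    ∃ z : E, ∃ p : ℕ, p.Prime ∧ z ^ p = 1 ∧ z ∉ ι.range ∧ ∀ g, ∃ a, R ι z a g := by
  haveI hnorm : ι.range.Normal := by
    apply normal_of_le_center'
    rintro _ ⟨a, rfl⟩
    exact Subgroup.mem_center_iff.2 fun g => (hcen a g).symm
  haveI : Finite (E ⧸ ι.range) := Nat.finite_of_card_ne_zero hN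
  haveI : Nontrivial (E ⧸ ι.range) := by
    rw [← Finite.one_lt_card_iff_nontrivial]
    change 1 < ι.range.index
    omega
  obtain ⟨y, p, hp, hyp, hy⟩ := exists_central_prime (E ⧸ ι.range)
  obtain ⟨x, rfl⟩ := QuotientGroup.mk_surjective y
  have hxp : x ^ p ∈ ι.range := by
    rw [← QuotientGroup.eq_one_iff, QuotientGroup.mk_pow, ← hyp, pow_orderOf_eq_one]
  obtain ⟨a, ha⟩ := hxp
  obtain ⟨b, hb⟩ := IsAlgClosed.exists_pow_nat_eq (a : ℂ) hp.pos
  have hb0 : b ≠ 0 := by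
    rintro rfl
    rw [zero_pow hp.ne_zero] at hb
    exact a.ne_zero hb.symm
  obtain ⟨b, rfl⟩ : ∃ b' : ℂˣ, (b' : ℂ) = b := ⟨Units.mk0 b hb0, rfl⟩
  have hb' : b ^ p = a := Units.ext (by simpa using hb)
  refine ⟨x * ι b⁻¹, p, hp, ?_, ?_, ?_⟩
  · have hcm : Commute x (ι b⁻¹) := (hcen _ _).symm
    rw [hcm.mul_pow, ← ha, ← map_pow, ← map_mul, ← hb']; simp
  · intro h
    have : x ∈ ι.range := by
      have := ι.range.mul_mem h ⟨b, rfl⟩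
      rwa [mul_assoc, ← map_mul, inv_mul_cancel, map_one, mul_one] at this
    rw [← QuotientGroup.eq_one_iff] at this
    rw [this, orderOf_one] at hyp
    exact hp.one_lt.ne hyp
  · intro g
    have h1 := hy g
    rw [← QuotientGroup.mk_mul, ← QuotientGroup.mk_mul, QuotientGroup.eq] at h1
    obtain ⟨c, hc⟩ := h1
    refine ⟨c, ?_⟩
    have h2 : x * g = ι c * (g * x) := by
      rw [hcen, hc]; group
    unfold R
    calc x * ι b⁻¹ * g = x * (ι b⁻¹ * g) := by group
      _ = (x * g) * ι b⁻¹ := by rw [hcen]; group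
      _ = _ := by rw [h2]; group

theorem main (N : ℕ) : ∀ (E : Type u) [Group E] [Group.IsNilpotent E] (ι : ℂˣ →* E),
    Function.Injective ι → (∀ a e, ι a * e = e * ι a) → ι.range.index = N → N ≠ 0 →
    ∃ (H : Subgroup E) (r : E → ℂˣ), ι.range ≤ H ∧ (∀ x ∈ H, ∀ y ∈ H, r (x * y) = r x * r y) ∧
      (∀ a, r (ι a) = a) ∧ H.index ^ 2 ∣ N ∧ (Nondeg ι → H.index ^ 2 = N) := by
  induction N using Nat.strong_induction_on with
  | _ N ih =>
  intro E _ _ ι hinj hcen hN hN0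
  by_cases hN1 : N = 1
  · have htop : ι.range = ⊤ := by
      rw [← Subgroup.index_eq_one, hN, hN1]
    have hsurj : Function.Surjective ι := MonoidHom.range_eq_top.1 htop
    let e := MulEquiv.ofBijective ι ⟨hinj, hsurj⟩
    refine ⟨⊤, e.symm, le_top, fun x _ y _ => map_mul _ _ _, ?_, by simp, by simp [hN1]⟩
    intro a
    exact e.symm_apply_apply a
  obtain ⟨z, p, hp, hzp, hzA, hz⟩ := exists_z hcen (hN ▸ hN0) (hN ▸ hN1)
  haveI : Fact p.Prime := ⟨hp⟩
  haveI : NeZero p := ⟨hp.ne_zero⟩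
  obtain ⟨χ, hχ⟩ := exists_chi hinj hcen z hz
  have hχp : ∀ g, χ g ^ p = 1 := by
    intro g
    have h1 := R.pow_left hcen (hχ g) p
    rw [hzp] at h1
    exact R.unique hinj h1 (by simp [R])
  have hq : χ.ker.index ∣ p := by
    rw [Subgroup.index_ker]
    have : χ.range ≤ rootsOfUnity p ℂ := by
      rintro _ ⟨g, rfl⟩
      exact hχp g
    have h1 := Subgroup.card_dvd_of_le this
    rwa [Complex.card_rootsOfUnity] at h1
  have hzz : χ z = 1 := R.unique hinj (hχ z) (by simp [R])
  have hχι : ∀ a, χ (ι a) = 1 := fun a =>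
    R.unique hinj (hχ (ι a)) (by simp [R, hcen])
  set K := χ.ker with hK
  let zK : K := ⟨z, hzz⟩
  let ιK : ℂˣ →* K := ι.codRestrict K hχι
  have hzKc : ∀ g : K, g * zK = zK * g := by
    intro g
    apply Subtype.ext
    have h1 := hχ (g : E)
    have h2 : χ (g : E) = 1 := g.2
    rw [h2] at h1
    have h3 : z * (g : E) = 1 * (g * z) := by simpa [R] using h1
    simpa using h3.symm
  haveI := zpowers_normal_of_central zK hzKc
  set Z := Subgroup.zpowers zK with hZ
  have hzKp : zK ^ p = 1 := Subtype.ext hzp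
  have hzK1 : zK ≠ 1 := by
    intro h
    apply hzA
    have : z = 1 := congrArg Subtype.val h
    rw [this]; exact one_mem _
  have hord : orderOf zK = p := orderOf_eq_prime hzKp hzK1
  have hcZ : Nat.card Z = p := by rw [hZ, Nat.card_zpowers, hord]
  have hιKcoe : ∀ a, ((ιK a : K) : E) = ι a := fun a => rfl
  have hzKA : zK ∉ ιK.range := by
    rintro ⟨a, ha⟩
    exact hzA ⟨a, congrArg Subtype.val ha⟩
  have hdisj : ιK.range ⊓ Z = ⊥ := by
    by_contra hne
    have hle : ιK.range ⊓ Z ≤ Z := inf_le_right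
    haveI : Finite Z := Nat.finite_of_card_ne_zero (by rw [hcZ]; exact hp.ne_zero)
    have hd := Subgroup.card_dvd_of_le hle
    rw [hcZ] at hd
    rcases (Nat.dvd_prime hp).1 hd with h1 | h1
    · exact hne (Subgroup.eq_bot_of_card_eq _ h1)
    · have : ιK.range ⊓ Z = Z := Subgroup.eq_of_le_of_card_ge hle (by rw [hcZ, h1])
      have h2 : zK ∈ ιK.range ⊓ Z := by rw [this]; exact Subgroup.mem_zpowers zK
      exact hzKA h2.1
  let π : K →* K ⧸ Z := QuotientGroup.mk' Z
  have hπs : Function.Surjective π := QuotientGroup.mk'_surjective Z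
  have hπk : π.ker = Z := QuotientGroup.ker_mk' Z
  let ι' : ℂˣ →* K ⧸ Z := π.comp ιK
  have hinj' : Function.Injective ι' := by
    rw [injective_iff_map_eq_one]
    intro a ha
    have h1 : ιK a ∈ Z := by rw [← hπk]; exact ha
    have h2 : ιK a ∈ ιK.range ⊓ Z := ⟨⟨a, rfl⟩, h1⟩
    rw [hdisj, Subgroup.mem_bot] at h2
    apply hinj
    rw [map_one]
    exact congrArg Subtype.val h2
  have hcenK : ∀ a e, ιK a * e = e * ιK a := fun a e => Subtype.ext (hcen a e)
  have hcen' : ∀ a e, ι' a * e = e * ι' a := by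
    intro a e
    obtain ⟨e, rfl⟩ := hπs e
    change π (ιK a) * π e = π e * π (ιK a)
    rw [← map_mul, ← map_mul, hcenK]
  haveI hnormK : ιK.range.Normal := by
    apply normal_of_le_center'
    rintro _ ⟨a, rfl⟩
    exact Subgroup.mem_center_iff.2 fun g => (hcenK a g).symm
  have hidx : N = ι'.range.index * p * K.index := by
    have e1 : ι.range = ιK.range.map K.subtype := by
      rw [MonoidHom.map_range]; rfl
    rw [← hN, e1, Subgroup.index_map_subtype]
    congr 1
    have e2 : ι'.range = ιK.range.map π := by
      rw [MonoidHom.map_range]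
    rw [e2, Subgroup.index_map, hπk, MonoidHom.range_eq_top.2 hπs, Subgroup.index_top, mul_one]
    have e3 : ιK.range.relIndex (ιK.range ⊔ Z) = p := by
      rw [Subgroup.relIndex_sup_left, ← Subgroup.inf_relIndex_right, hdisj,
        Subgroup.relIndex_bot_left, hcZ]
    rw [← Subgroup.relIndex_mul_index (le_sup_left : ιK.range ≤ ιK.range ⊔ Z), e3, mul_comm]
  have hN'0 : ι'.range.index ≠ 0 := by
    intro h
    apply hN0
    rw [hidx, h]; simp
  have hK0 : K.index ≠ 0 := by
    intro h
    apply hN0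
    rw [hidx, h]; simp
  have hlt : ι'.range.index < N := by
    rw [hidx]
    have h1 := hp.two_le
    have h2 : 1 ≤ K.index := Nat.one_le_iff_ne_zero.2 hK0
    have h3 : 1 ≤ ι'.range.index := Nat.one_le_iff_ne_zero.2 hN'0
    calc ι'.range.index < ι'.range.index * p := by nlinarith
      _ ≤ _ := Nat.le_mul_of_pos_right _ h2
  obtain ⟨H', r', hH', hr', hrι', hdvd, hnd'⟩ := ih _ hlt (K ⧸ Z) ι' hinj' hcen' rfl hN'0
  classical
  have hHi : ((H'.comap π).map K.subtype).index = H'.index * K.index := by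
    rw [Subgroup.index_map_subtype, Subgroup.index_comap_of_surjective _ hπs]
  obtain ⟨r, hrK⟩ : ∃ r : E → ℂˣ, ∀ x : K, r x = r' (π x) :=
    ⟨fun x => if h : x ∈ K then r' (π ⟨x, h⟩) else 1, fun x => dif_pos x.2⟩
  refine ⟨(H'.comap π).map K.subtype, r,
    ?_, ?_, ?_, ?_, ?_⟩
  · rintro _ ⟨a, rfl⟩
    exact ⟨ιK a, hH' ⟨a, rfl⟩, rfl⟩
  · rintro _ ⟨x, hx, rfl⟩ _ ⟨y, hy, rfl⟩
    change r ((x * y : K) : E) = r (x : E) * r (y : E)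
    rw [hrK, hrK, hrK, map_mul]
    exact hr' (π x) hx (π y) hy
  · intro a
    rw [← hιKcoe, hrK]
    exact hrι' a
  · rw [hHi, hidx, mul_pow, sq K.index, mul_assoc]
    exact mul_dvd_mul hdvd (mul_dvd_mul_right hq _)
  · intro hnd
    have hKp : K.index = p := by
      rcases (Nat.dvd_prime hp).1 hq with h1 | h1
      · exfalso
        obtain ⟨g, a, ha, hg⟩ := hnd z hzA
        have h2 : g ∈ K := by
          rw [Subgroup.index_eq_one.1 h1]; trivial
        have h3 : χ g = 1 := h2
        exact ha ((R.unique hinj hg (hχ g)).trans h3)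
      · exact h1
    have hnd2 : Nondeg ι' := by
      intro e he
      obtain ⟨k, rfl⟩ := hπs e
      by_contra hcon
      push Not at hcon
      refine nondeg_key hinj hcen z χ hχ hp hχp hnd (k : E) ?_ ?_
      · rintro i ⟨a, ha⟩
        apply he
        refine ⟨a, ?_⟩
        have h1 : ιK a = k * (zK ^ i)⁻¹ := Subtype.ext ha
        change π (ιK a) = π k
        have h2 : π (zK ^ i)⁻¹ = 1 := by
          rw [← MonoidHom.mem_ker, hπk]
          exact inv_mem (pow_mem (Subgroup.mem_zpowers zK) i)
        rw [h1, map_mul, h2, mul_one]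
      · intro g a hg hR
        by_contra ha
        apply hcon (π ⟨g, hg⟩) a ha
        have h1 : k * ⟨g, hg⟩ = ιK a * (⟨g, hg⟩ * k) := Subtype.ext hR
        have h2 := congrArg π h1
        simp only [map_mul] at h2
        exact h2
    rw [hHi, hidx, mul_pow, hnd' hnd2, hKp]
    ring

/-- The central extension attached to a cocycle. -/
@[ext] structure Ext {G : Type u} [Group G] (c : G → G → ℂˣ) where
  /-- base component -/
  g : G
  /-- scalar component -/
  a : ℂˣ

section
variable {G : Type u} [Group G] (c : G → G → ℂˣ)
    (hc : ∀ g h k : G, c g h * c (g * h) k = c h k * c g (h * k))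
include hc

theorem c_one_left (g : G) : c 1 g = c 1 1 := by
  have := hc 1 1 g
  simp only [one_mul] at this
  rw [mul_comm] at this
  exact (mul_left_cancel this).symm

theorem c_one_right (g : G) : c g 1 = c 1 1 := by
  have := hc g 1 1
  simp only [mul_one] at this
  exact mul_right_cancel this

/-- group structure on the extension -/
@[reducible] noncomputable def extGroup : Group (Ext c) :=
  letI : Mul (Ext c) := ⟨fun x y => ⟨x.g * y.g, x.a * y.a * c x.g y.g⟩⟩
  letI : One (Ext c) := ⟨⟨1, (c 1 1)⁻¹⟩⟩
  letI : Inv (Ext c) := ⟨fun x => ⟨x.g⁻¹, (c 1 1)⁻¹ * (x.a * c x.g⁻¹ x.g)⁻¹⟩⟩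
  Group.ofLeftAxioms
    (by
      intro x y z
      refine Ext.ext (mul_assoc _ _ _) ?_
      change x.a * y.a * c x.g y.g * z.a * c (x.g * y.g) z.g
        = x.a * (y.a * z.a * c y.g z.g) * c x.g (y.g * z.g)
      have := hc x.g y.g z.g
      calc _ = x.a * y.a * z.a * (c x.g y.g * c (x.g * y.g) z.g) := by
              simp only [mul_assoc, mul_comm, mul_left_comm]
        _ = _ := by rw [this]; simp only [mul_assoc, mul_comm, mul_left_comm])
    (by
      intro x
      refine Ext.ext (one_mul _) ?_
      change (c 1 1)⁻¹ * x.a * c 1 x.g = x.a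
      rw [c_one_left c hc x.g]; simp [mul_comm])
    (by
      intro x
      refine Ext.ext (inv_mul_cancel _) ?_
      change (c 1 1)⁻¹ * (x.a * c x.g⁻¹ x.g)⁻¹ * x.a * c x.g⁻¹ x.g = (c 1 1)⁻¹
      rw [mul_assoc, mul_assoc, inv_mul_cancel, mul_one])

theorem final [Finite G] [Group.IsNilpotent G] :
    ∃ (H : Subgroup G) (f : G → ℂˣ), (∀ a ∈ H, ∀ b ∈ H, c a b = f a * f b * (f (a * b))⁻¹) ∧
      H.index ^ 2 ∣ Nat.card G ∧
      ((∀ x : G, x ≠ 1 → ∃ g : G, x * g = g * x ∧ c x g ≠ c g x) → H.index ^ 2 = Nat.card G) := by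
  letI := extGroup c hc
  have hmul : ∀ x y : Ext c, x * y = ⟨x.g * y.g, x.a * y.a * c x.g y.g⟩ := fun _ _ => rfl
  have hone : (1 : Ext c) = ⟨1, (c 1 1)⁻¹⟩ := rfl
  let ι : ℂˣ →* Ext c := MonoidHom.mk' (fun a => ⟨1, a * (c 1 1)⁻¹⟩) (by
    intro a b
    rw [hmul]
    refine Ext.ext (one_mul _).symm ?_
    simp [mul_assoc, mul_comm, mul_left_comm])
  have hι : ∀ a, ι a = ⟨1, a * (c 1 1)⁻¹⟩ := fun _ => rfl
  have hιl : ∀ a (x : Ext c), ι a * x = ⟨x.g, a * x.a⟩ := by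
    intro a x
    rw [hmul, hι]
    refine Ext.ext (one_mul _) ?_
    simp [c_one_left c hc, mul_assoc, mul_comm, mul_left_comm]
  have hιr : ∀ a (x : Ext c), x * ι a = ⟨x.g, a * x.a⟩ := by
    intro a x
    rw [hmul, hι]
    refine Ext.ext (mul_one _) ?_
    simp [c_one_right c hc, mul_assoc, mul_comm, mul_left_comm]
  have hinj : Function.Injective ι := by
    intro a b h
    have := congrArg Ext.a h
    exact mul_right_cancel this
  have hcen : ∀ a e, ι a * e = e * ι a := fun a e => by rw [hιl, hιr]
  let π : Ext c →* G := MonoidHom.mk' Ext.g (fun _ _ => rfl)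
  have hπs : Function.Surjective π := fun g => ⟨⟨g, 1⟩, rfl⟩
  have hπk : π.ker = ι.range := by
    ext x
    constructor
    · intro hx
      have hx1 : x.g = 1 := hx
      exact ⟨x.a * c 1 1, Ext.ext hx1.symm (by simp [hι])⟩
    · rintro ⟨a, rfl⟩
      rfl
  haveI : Group.IsNilpotent (Ext c) := by
    refine Subgroup.isNilpotent_of_ker_le_center π ?_
    rw [hπk]
    rintro _ ⟨a, rfl⟩
    exact Subgroup.mem_center_iff.2 fun g => (hcen a g).symm
  have hidx : ι.range.index = Nat.card G := by
    rw [← hπk, Subgroup.index_ker, MonoidHom.range_eq_top.2 hπs, Subgroup.card_top]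
  obtain ⟨H, r, hAH, hr, hrι, hd, hnd⟩ := main (Nat.card G) (Ext c) ι hinj hcen hidx
    Nat.card_pos.ne'
  have hHi : (H.map π).index = H.index :=
    Subgroup.index_map_eq H hπs (hπk ▸ hAH)
  have hmem : ∀ g ∈ H.map π, (⟨g, 1⟩ : Ext c) ∈ H := by
    rintro _ ⟨x, hx, rfl⟩
    have := H.mul_mem (hAH ⟨x.a⁻¹, rfl⟩) hx
    rw [hιl, inv_mul_cancel] at this
    exact this
  refine ⟨H.map π, fun g => r ⟨g, 1⟩, ?_, hHi ▸ hd, ?_⟩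
  · intro a ha b hb
    have h1 := hr _ (hmem a ha) _ (hmem b hb)
    have h2 : (⟨a, 1⟩ : Ext c) * ⟨b, 1⟩ = ι (c a b) * ⟨a * b, 1⟩ := by
      rw [hιl, hmul]; simp
    rw [h2, hr _ (hAH ⟨_, rfl⟩) _ (hmem _ (mul_mem ha hb)), hrι] at h1
    rw [← h1, mul_inv_cancel_right]
  · intro h
    rw [hHi]
    apply hnd
    intro e he
    have : e.g ≠ 1 := by
      intro h1
      exact he (hπk ▸ h1)
    obtain ⟨g, hg, hne⟩ := h _ this
    refine ⟨⟨g, 1⟩, c e.g g * (c g e.g)⁻¹, ?_, ?_⟩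
    · intro h1
      exact hne (mul_inv_eq_one.1 h1)
    · unfold R
      rw [hιl, hmul, hmul]
      refine Ext.ext hg ?_
      simp [mul_assoc, mul_comm]

end

end NilIso

/-- Let `G` be a finite nilpotent group and `[c] ∈ H²(G, ℂ*)` any
class. For any `n` with `n²` dividing `|G|` (equivalently, `n` is a product of prime
powers whose squares divide the corresponding Sylow orders), `[c]` admits an
isotropic subgroup of order `n`. In particular a non-degenerate class over a
nilpotent group admits a Lagrangian: an isotropic subgroup of order `√|G|`. -/
theorem nilpotent_isotropic_subgroup
    {G : Type*} [Group G] [Fintype G] [Group.IsNilpotent G]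
    (c : G → G → ℂˣ)
    (hc : ∀ g h k : G, c g h * c (g * h) k = c h k * c g (h * k)) :
    (∀ n : ℕ, n ^ 2 ∣ Fintype.card G →
      ∃ H : Subgroup G, Nat.card H = n ∧
        ∃ f : H → ℂˣ, ∀ a b : H, c (a : G) (b : G) = f a * f b * (f (a * b))⁻¹) ∧
    ((∀ x : G, x ≠ 1 → ∃ g : G, x * g = g * x ∧ c x g ≠ c g x) →
      ∃ H : Subgroup G, (Nat.card H) ^ 2 = Fintype.card G ∧
        ∃ f : H → ℂˣ, ∀ a b : H, c (a : G) (b : G) = f a * f b * (f (a * b))⁻¹) := by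
  classical
  obtain ⟨H, f, hf, hd, hnd⟩ := NilIso.final c hc
  rw [Nat.card_eq_fintype_card] at hd hnd
  have hci : Nat.card H * H.index = Fintype.card G := by
    rw [Subgroup.card_mul_index, Nat.card_eq_fintype_card]
  have hi0 : 0 < H.index := Nat.pos_of_ne_zero Subgroup.index_ne_zero_of_finite
  have hdH : H.index ∣ Nat.card H := by
    rw [← hci, sq] at hd
    exact Nat.dvd_of_mul_dvd_mul_right hi0 hd
  constructor
  · intro n hn
    have h1 : n ^ 2 ∣ Nat.card H ^ 2 := by
      refine hn.trans ?_
      rw [← hci, sq]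
      exact mul_dvd_mul_left _ hdH
    have h2 : n ∣ Nat.card H := (Nat.pow_dvd_pow_iff two_ne_zero).1 h1
    obtain ⟨L, hL⟩ := NilIso.exists_subgroup_card (Nat.card H) H rfl n h2
    refine ⟨L.map H.subtype, ?_, fun x => f x, ?_⟩
    · rw [Nat.card_congr (Subgroup.equivMapOfInjective L _ H.subtype_injective).toEquiv.symm, hL]
    · intro a b
      have hle : L.map H.subtype ≤ H := Subgroup.map_subtype_le L
      exact hf a (hle a.2) b (hle b.2)
  · intro h
    refine ⟨H, ?_, fun x => f x, fun a b => hf a a.2 b b.2⟩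
    have h1 := hnd h
    have h2 : Nat.card H = H.index := by
      rw [← hci, sq] at h1
      exact (Nat.eq_of_mul_eq_mul_right hi0 h1).symm
    rw [h2, h1]
end

section
/- Let G be a group of order p^m, p prime, and [c] ∈ H²(G, ℂ*) any cohomology class. If i satisfies (i² + i − 2)/2 < m, then [c] admits an isotropic normal abelian subgroup A ◁ G of order p^i. Moreover, any normal abelian isotropic subgroup of order p^{i−1} is contained in a normal abelian isotropic subgroup of order p^i. -/
namespace IsoAux

lemma ext_step {G : Type*} [Group G] [Finite G] {p : ℕ} [hp : Fact p.Prime]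
    (hG : IsPGroup p G) (N M : Subgroup G) [N.Normal] [M.Normal] (hNM : N < M) :
    ∃ a ∈ M, ∃ N' : Subgroup G, N'.Normal ∧ N ≤ N' ∧ N' ≤ M ∧ a ∈ N' ∧
      Nat.card N' = p * Nat.card N ∧ a ^ p ∈ N ∧ (∀ g : G, g * a * g⁻¹ * a⁻¹ ∈ N) ∧
      ∀ x ∈ N', ∃ n ∈ N, ∃ k : ℤ, x = n * a ^ k := by
  let π : G →* G ⧸ N := QuotientGroup.mk' N
  have hπ : Function.Surjective π := QuotientGroup.mk'_surjective N
  have hker : ∀ x, π x = 1 ↔ x ∈ N := fun x => QuotientGroup.eq_one_iff x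
  let L : Subgroup (G ⧸ N) := M.map π
  have hLn : L.Normal := Subgroup.Normal.map inferInstance π hπ
  have hLnt : Nontrivial L := by
    obtain ⟨x, hxM, hxN⟩ := SetLike.exists_of_lt hNM
    refine ⟨⟨⟨π x, Subgroup.mem_map_of_mem π hxM⟩, 1, fun h => hxN ?_⟩⟩
    exact (hker x).1 (congrArg Subtype.val h)
  have hQ : IsPGroup p (G ⧸ N) := hG.to_quotient N
  have hQ' : IsPGroup p (ConjAct (G ⧸ N)) := hQ
  have hdvd : p ∣ Nat.card L := by
    obtain ⟨n, hn, h⟩ := (hQ.to_subgroup L).nontrivial_iff_card.1 hLnt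
    rw [h]; exact dvd_pow_self p hn.ne'
  have h1 : (1 : L) ∈ MulAction.fixedPoints (ConjAct (G ⧸ N)) L := by
    intro g; exact smul_one g
  obtain ⟨z, hz, hz1⟩ := hQ'.exists_fixed_point_of_prime_dvd_card_of_fixed_point L hdvd h1
  have hzc : ∀ g : G ⧸ N, g * z * g⁻¹ = z := by
    intro g
    have := congrArg Subtype.val (hz (ConjAct.toConjAct g))
    simpa [ConjAct.Subgroup.val_conj_smul, ConjAct.smul_def] using this
  have hz1' : (z : G ⧸ N) ≠ 1 := fun h => hz1 (Subtype.ext h.symm)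
  obtain ⟨k, hk⟩ := (IsPGroup.iff_orderOf.1 hQ) (z : G ⧸ N)
  have hk0 : k ≠ 0 := by
    rintro rfl
    exact hz1' (orderOf_eq_one_iff.1 (by simpa using hk))
  obtain ⟨k, rfl⟩ := Nat.exists_eq_succ_of_ne_zero hk0
  obtain ⟨y, hyo, hyL, hyc⟩ : ∃ y : G ⧸ N, orderOf y = p ∧ y ∈ L ∧ ∀ g, g * y * g⁻¹ = y := by
    refine ⟨(z : G ⧸ N) ^ (p ^ k), ?_, L.pow_mem z.2 _, fun g => ?_⟩
    · rw [orderOf_pow_of_dvd (pow_ne_zero _ hp.out.ne_zero) (by rw [hk]; exact pow_dvd_pow _ (Nat.le_succ k)), hk,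
        Nat.pow_succ, Nat.mul_div_cancel_left _ (pow_pos hp.out.pos _)]
    · rw [← conj_pow, hzc]
  obtain ⟨a, haM, rfl⟩ := hyL
  refine ⟨a, haM, (Subgroup.zpowers (π a)).comap π, ?_, ?_, ?_, ?_, ?_, ?_, ?_, ?_⟩
  · have : (Subgroup.zpowers (π a)).Normal := by
      constructor
      rintro _ ⟨k, rfl⟩ g
      refine ⟨k, ?_⟩
      simp only
      rw [← conj_zpow, hyc]
    exact this.comap π
  · intro x hx
    rw [Subgroup.mem_comap, (hker x).2 hx]
    exact one_mem _
  · rintro x ⟨k, hk⟩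
    have : π (x * (a ^ k)⁻¹) = 1 := by
      simp only [map_mul, map_inv, map_zpow]; simp only at hk; rw [hk]; simp
    have := hNM.le ((hker _).1 this)
    simpa using M.mul_mem this (M.zpow_mem haM k)
  · exact Subgroup.mem_zpowers (π a)
  · have h1 := ((Subgroup.zpowers (π a)).comap π).card_mul_index
    rw [Subgroup.index_comap_of_surjective _ hπ] at h1
    have h2 := (Subgroup.zpowers (π a)).card_mul_index
    have h3 := N.card_mul_index
    rw [Nat.card_zpowers, hyo] at h2
    have h4 : N.index = Nat.card (G ⧸ N) := rfl
    have h5 : (Subgroup.zpowers (π a)).index ≠ 0 := Subgroup.index_ne_zero_of_finite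
    apply Nat.eq_of_mul_eq_mul_right (Nat.pos_of_ne_zero h5)
    rw [h1, ← h3, h4, ← h2]; ring
  · rw [← hker, map_pow, ← hyo, pow_orderOf_eq_one]
  · intro g
    rw [← hker]
    simp only [map_mul, map_inv]
    rw [hyc]; simp
  · rintro x ⟨k, hk⟩
    refine ⟨x * (a ^ k)⁻¹, ?_, k, by simp⟩
    rw [← hker]
    simp only [map_mul, map_inv, map_zpow]; simp only at hk; rw [hk]; simp

section
variable {G E : Type*} [Group G] [Finite G] [Group E] {p : ℕ} [hp : Fact p.Prime]

lemma torsion_bound (π : E →* G)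
    (hT : {z : E | π z = 1 ∧ z ^ p = 1}.Finite) (hTc : {z : E | π z = 1 ∧ z ^ p = 1}.ncard ≤ p)
    (N : Subgroup G) (hN : ∀ x y : E, π x ∈ N → π y ∈ N → x * y = y * x) :
    {t : E | π t ∈ N ∧ t ^ p = 1}.Finite ∧
    {t : E | π t ∈ N ∧ t ^ p = 1}.ncard ≤ p * Nat.card N := by
  classical
  set T := {t : E | π t ∈ N ∧ t ^ p = 1}
  set Z := {z : E | π z = 1 ∧ z ^ p = 1}
  have : Finite Z := hT
  let s : G → E := fun g => if h : ∃ t ∈ T, π t = g then h.choose else 1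
  have hs : ∀ t ∈ T, s (π t) ∈ T ∧ π (s (π t)) = π t := by
    intro t ht
    have h : ∃ t' ∈ T, π t' = π t := ⟨t, ht, rfl⟩
    simp only [s, dif_pos h]
    exact h.choose_spec
  let φ : T → Z × N := fun t => (⟨t * (s (π t))⁻¹, by
    obtain ⟨h1, h2⟩ := hs t t.2
    refine ⟨by rw [map_mul, map_inv, h2, mul_inv_cancel], ?_⟩
    have hc : Commute (t : E) (s (π t)) := hN _ _ t.2.1 h1.1
    rw [hc.inv_right.mul_pow, inv_pow, t.2.2, h1.2]; simp⟩, ⟨π t, t.2.1⟩)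
  have hφ : Function.Injective φ := by
    intro t u h
    have h2 : π t = π u := congrArg (fun q => (q.2 : G)) h
    have h1 : (t : E) * (s (π t))⁻¹ = u * (s (π u))⁻¹ := congrArg (fun q => (q.1 : E)) h
    rw [h2] at h1
    exact Subtype.ext (mul_right_cancel h1)
  refine ⟨Finite.of_injective φ hφ, ?_⟩
  have := Nat.card_le_card_of_injective φ hφ
  rw [Nat.card_prod, Nat.card_coe_set_eq, Nat.card_coe_set_eq] at this
  exact this.trans (Nat.mul_le_mul_right _ hTc)

lemma relIndex_bound (H : Subgroup E) (b : E) (T : Set E) (hT : T.Finite)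
    (h : ∀ g ∈ H, g * b * g⁻¹ * b⁻¹ ∈ T) :
    (Subgroup.centralizer {b}).relIndex H ≠ 0 ∧ (Subgroup.centralizer {b}).relIndex H ≤ T.ncard := by
  have : Finite T := hT
  let φ : (H ⧸ (Subgroup.centralizer {b}).subgroupOf H) → T :=
    fun q => ⟨_, h (q.out : H) (q.out : H).2⟩
  have hφ : Function.Injective φ := by
    intro q r hqr
    have h1 := congrArg Subtype.val hqr
    simp only [φ, mul_left_inj] at h1
    rw [← q.out_eq', ← r.out_eq']
    apply QuotientGroup.eq.2
    rw [Subgroup.mem_subgroupOf, Subgroup.mem_centralizer_singleton_iff]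
    push_cast
    have h2 := congrArg (fun x => ((q.out : H) : E)⁻¹ * x * (r.out : H)) h1
    simp only [mul_assoc, inv_mul_cancel_left, inv_mul_cancel, mul_one] at h2
    simp only [mul_assoc]
    exact h2.symm
  have hf : Finite (H ⧸ (Subgroup.centralizer {b}).subgroupOf H) := Finite.of_injective φ hφ
  refine ⟨?_, ?_⟩
  · exact Nat.card_ne_zero.2 ⟨⟨QuotientGroup.mk 1⟩, hf⟩
  · have := Nat.card_le_card_of_injective φ hφ
    rwa [Nat.card_coe_set_eq] at this

lemma chain (hG : IsPGroup p G) (π : E →* G) (hπ : Function.Surjective π)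
    (hZ : ∀ z x : E, π z = 1 → z * x = x * z)
    (hT : {z : E | π z = 1 ∧ z ^ p = 1}.Finite) (hTc : {z : E | π z = 1 ∧ z ^ p = 1}.ncard ≤ p)
    (B : Subgroup G) [B.Normal] (hB : ∀ x y : E, π x ∈ B → π y ∈ B → x * y = y * x)
    (j : ℕ) (hj : Nat.card B = p ^ j) (k : ℕ) (hk : k ≤ j) :
    ∃ N : Subgroup G, N ≤ B ∧ N.Normal ∧ Nat.card N = p ^ k ∧
      (Subgroup.centralizer (N.comap π : Set E)).index ≠ 0 ∧
      (Subgroup.centralizer (N.comap π : Set E)).index ≤ p ^ (k * (k + 1) / 2) := by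
  induction k with
  | zero =>
    refine ⟨⊥, bot_le, inferInstance, by simp, ?_⟩
    have : Subgroup.centralizer ((⊥ : Subgroup G).comap π : Set E) = ⊤ := by
      rw [eq_top_iff]
      intro x _
      rw [Subgroup.mem_centralizer_iff]
      intro z hz
      exact hZ z x hz
    rw [this]; simp
  | succ k ih =>
    obtain ⟨N, hNB, hNn, hNc, hi0, hi⟩ := ih (by omega)
    have hlt : N < B := by
      refine lt_of_le_of_ne hNB ?_
      rintro rfl
      rw [hNc] at hj
      have := Nat.pow_right_injective hp.out.two_le hj
      omega
    obtain ⟨a, haB, N', hN'n, hNN', hN'B, haN', hN'c, hap, hcomm, hgen⟩ := ext_step hG N B hlt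
    obtain ⟨b, rfl⟩ := hπ a
    refine ⟨N', hN'B, hN'n, by rw [hN'c, hNc, pow_succ']; , ?_⟩
    set H := Subgroup.centralizer (N.comap π : Set E) with hH
    have hle : Subgroup.centralizer {b} ⊓ H ≤ Subgroup.centralizer (N'.comap π : Set E) := by
      rintro g ⟨hg1, hg2⟩
      have hg1 : g * b = b * g := Subgroup.mem_centralizer_singleton_iff.1 hg1
      have hg2 := Subgroup.mem_centralizer_iff.1 hg2
      rw [Subgroup.mem_centralizer_iff]
      intro x hx
      obtain ⟨n, hn, l, hl⟩ := hgen _ hx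
      have hy : (x * (b ^ l)⁻¹) * g = g * (x * (b ^ l)⁻¹) := by
        apply hg2
        change π _ ∈ N
        rw [map_mul, hl]; simpa using hn
      have hbl : Commute (b ^ l) g := Commute.zpow_left (Eq.symm hg1) l
      have := (Commute.mul_left (show Commute (x * (b ^ l)⁻¹) g from hy) hbl)
      simpa using this.eq
    obtain ⟨tf, tc⟩ := torsion_bound π hT hTc N (fun x y hx hy => hB x y (hNB hx) (hNB hy))
    obtain ⟨r0, r1⟩ := relIndex_bound H b _ tf (by
      intro g hg
      have ht : π (g * b * g⁻¹ * b⁻¹) ∈ N := by simpa using hcomm (π g)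
      refine ⟨ht, ?_⟩
      have hc : Commute (g * b * g⁻¹ * b⁻¹) b := hB _ _ (hNB ht) haB
      have h1 : (g * b * g⁻¹) ^ p = (g * b * g⁻¹ * b⁻¹) ^ p * b ^ p := by
        rw [← hc.mul_pow]; simp
      have h2 : b ^ p * g = g * b ^ p :=
        Subgroup.mem_centralizer_iff.1 hg (b ^ p) (by
          change π _ ∈ N
          rwa [map_pow])
      rw [conj_pow, ← h2, mul_inv_cancel_right] at h1
      exact (right_eq_mul.1 h1))
    have hidx : (Subgroup.centralizer {b} ⊓ H).index =
        (Subgroup.centralizer {b}).relIndex H * H.index := by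
      rw [← Subgroup.relIndex_mul_index (inf_le_right : Subgroup.centralizer {b} ⊓ H ≤ H),
        Subgroup.inf_relIndex_right]
    have hne : (Subgroup.centralizer {b} ⊓ H).index ≠ 0 := by
      rw [hidx]; exact mul_ne_zero r0 hi0
    have hd := Subgroup.index_dvd_of_le hle
    refine ⟨fun h0 => hne (by rw [h0] at hd; exact zero_dvd_iff.1 hd), ?_⟩
    refine (Nat.le_of_dvd (Nat.pos_of_ne_zero hne) hd).trans ?_
    rw [hidx]
    refine (Nat.mul_le_mul (r1.trans tc) hi).trans ?_
    have he : (k + 1) * (k + 1 + 1) / 2 = k * (k + 1) / 2 + (k + 1) := by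
      rw [← Nat.add_mul_div_right _ _ (by norm_num : 0 < 2)]
      congr 1; ring
    rw [he, hNc, pow_add, ← pow_succ', mul_comm]

lemma main_step (m : ℕ) (hG : Nat.card G = p ^ m) (π : E →* G) (hπ : Function.Surjective π)
    (hZ : ∀ z x : E, π z = 1 → z * x = x * z)
    (hT : {z : E | π z = 1 ∧ z ^ p = 1}.Finite) (hTc : {z : E | π z = 1 ∧ z ^ p = 1}.ncard ≤ p)
    (B : Subgroup G) [B.Normal] (hB : ∀ x y : E, π x ∈ B → π y ∈ B → x * y = y * x)
    (j : ℕ) (hj : Nat.card B = p ^ j) (hjm : j * (j + 1) / 2 + j < m) :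
    ∃ A : Subgroup G, B ≤ A ∧ A.Normal ∧ (∀ x y : E, π x ∈ A → π y ∈ A → x * y = y * x) ∧
      Nat.card A = p ^ (j + 1) := by
  have hpG : IsPGroup p G := IsPGroup.of_card hG
  obtain ⟨N, hNB, -, hNc, hi0, hi⟩ := chain hpG π hπ hZ hT hTc B hB j hj j le_rfl
  have : N = B := Subgroup.eq_of_le_of_card_ge hNB (by rw [hNc, hj])
  subst this
  set C := Subgroup.centralizer (N.comap π : Set E) with hC
  have hCn : C.Normal := by
    constructor
    intro c hc g
    rw [hC, Subgroup.mem_centralizer_iff] at hc ⊢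
    intro x hx
    have hx' : g⁻¹ * x * g ∈ (N.comap π : Set E) := by
      change π _ ∈ N
      have := (inferInstance : N.Normal).conj_mem (π x) hx (π g)⁻¹
      simpa using this
    have h2 := congrArg (fun y => g * y * g⁻¹) (hc _ hx')
    simp only [mul_assoc, mul_inv_cancel_left, mul_inv_cancel, mul_one] at h2
    simpa only [mul_assoc] using h2
  have hNC : N.comap π ≤ C := by
    intro x hx
    rw [hC, Subgroup.mem_centralizer_iff]
    intro y hy
    exact hB y x hy hx
  have hMn : (C.map π).Normal := hCn.map π hπ
  have hle : N ≤ C.map π := by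
    intro x hx
    obtain ⟨y, rfl⟩ := hπ x
    exact Subgroup.mem_map_of_mem π (hNC hx)
  have hlt : N < C.map π := by
    refine lt_of_le_of_ne hle ?_
    intro heq
    have h1 : C ≤ N.comap π := by rw [← Subgroup.map_le_iff_le_comap, ← heq]
    have h2 : C = N.comap π := le_antisymm h1 hNC
    have h3 : C.index = N.index := by rw [h2, Subgroup.index_comap_of_surjective _ hπ]
    have h4 := N.card_mul_index
    rw [hG, hj, ← h3] at h4
    have h5 : p ^ m ≤ p ^ j * p ^ (j * (j + 1) / 2) := by
      rw [← h4]; exact Nat.mul_le_mul_left _ hi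
    rw [← pow_add] at h5
    have := (Nat.pow_le_pow_iff_right hp.out.one_lt).1 h5
    omega
  obtain ⟨a, haM, A, hAn, hNA, hAM, haA, hAc, hap, hcomm, hgen⟩ := ext_step hpG N (C.map π) hlt
  refine ⟨A, hNA, hAn, ?_, by rw [hAc, hj, pow_succ']⟩
  obtain ⟨b, hbC, rfl⟩ := haM
  have hbC' := Subgroup.mem_centralizer_iff.1 hbC
  have key : ∀ x, π x ∈ A → ∃ n, π n ∈ N ∧ ∃ k : ℤ, x = n * b ^ k := by
    intro x hx
    obtain ⟨n, hn, l, hl⟩ := hgen _ hx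
    refine ⟨x * (b ^ l)⁻¹, ?_, l, by simp⟩
    rw [map_mul, hl]; simpa using hn
  intro x y hx hy
  obtain ⟨n, hn, k, rfl⟩ := key x hx
  obtain ⟨n', hn', k', rfl⟩ := key y hy
  have c1 : Commute n n' := hB _ _ hn hn'
  have c2 : Commute n b := hbC' n hn
  have c3 : Commute n' b := hbC' n' hn'
  exact ((c1.mul_right (c2.zpow_right k')).mul_left
    (((c3.zpow_right k).symm).mul_right (Commute.zpow_zpow_self b k k'))).eq

end

/-- The central extension of `G` by `ℂˣ` attached to `c`. -/
@[ext] structure CExt {G : Type*} (c : G → G → ℂˣ) where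
  z : ℂˣ
  g : G

section
variable {G : Type*} [Group G] {c : G → G → ℂˣ}
lemma c_one_left (hc : ∀ g h k : G, c g h * c (g * h) k = c h k * c g (h * k))
    (g : G) : c 1 g = c 1 1 := by
  have := hc 1 1 g
  simp only [one_mul] at this
  exact (mul_right_cancel this).symm

lemma c_one_right (hc : ∀ g h k : G, c g h * c (g * h) k = c h k * c g (h * k))
    (g : G) : c g 1 = c 1 1 := by
  have := hc g 1 1
  simp only [one_mul, mul_one] at this
  exact mul_right_cancel this

/-- The group structure on the central extension. -/
@[reducible] def cextGroup (hc : ∀ g h k : G, c g h * c (g * h) k = c h k * c g (h * k)) :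
    Group (CExt c) :=
  letI : Mul (CExt c) := ⟨fun x y => ⟨x.z * y.z * c x.g y.g, x.g * y.g⟩⟩
  letI : One (CExt c) := ⟨⟨(c 1 1)⁻¹, 1⟩⟩
  letI : Inv (CExt c) := ⟨fun x => ⟨x.z⁻¹ * (c x.g⁻¹ x.g)⁻¹ * (c 1 1)⁻¹, x.g⁻¹⟩⟩
  Group.ofLeftAxioms
    (by
      intro x y w
      refine CExt.ext ?_ (mul_assoc _ _ _)
      change x.z * y.z * c x.g y.g * w.z * c (x.g * y.g) w.g
        = x.z * (y.z * w.z * c y.g w.g) * c x.g (y.g * w.g)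
      calc _ = x.z * y.z * w.z * (c x.g y.g * c (x.g * y.g) w.g) := by
            simp only [mul_assoc, mul_comm, mul_left_comm]
        _ = _ := by rw [hc]; simp only [mul_assoc, mul_comm, mul_left_comm])
    (by
      intro x
      refine CExt.ext ?_ (one_mul _)
      change (c 1 1)⁻¹ * x.z * c 1 x.g = x.z
      rw [c_one_left hc x.g, mul_comm, mul_inv_cancel_left])
    (by
      intro x
      refine CExt.ext ?_ (inv_mul_cancel _)
      change x.z⁻¹ * (c x.g⁻¹ x.g)⁻¹ * (c 1 1)⁻¹ * x.z * c x.g⁻¹ x.g = (c 1 1)⁻¹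
      rw [mul_comm, mul_comm _ x.z]
      simp [mul_assoc])

/-- Projection of the central extension. -/
def cextProj (hc : ∀ g h k : G, c g h * c (g * h) k = c h k * c g (h * k)) :
    letI := cextGroup hc
    CExt c →* G :=
  letI := cextGroup hc
  MonoidHom.mk' (fun x => x.g) (fun _ _ => rfl)

lemma baer : Module.Baer ℤ (Additive ℂˣ) := by
  have hroot : ∀ {n : ℕ} (a : ℂˣ), n ≠ 0 → ∃ b : ℂˣ, b ^ n = a := by
    intro n a hn
    obtain ⟨z, hz⟩ := IsAlgClosed.exists_pow_nat_eq (a : ℂ) (Nat.pos_of_ne_zero hn)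
    have hz0 : z ≠ 0 := by
      rintro rfl
      rw [zero_pow hn] at hz
      exact a.ne_zero hz.symm
    exact ⟨Units.mk0 z hz0, Units.ext (by simpa using hz)⟩
  have hsurj : ∀ {n : ℤ}, n ≠ 0 → Function.Surjective (fun a : Additive ℂˣ => n • a) := by
    intro n hn a
    obtain ⟨b, hb⟩ := hroot (n := n.natAbs) a.toMul (Int.natAbs_ne_zero.2 hn)
    rcases Int.natAbs_eq n with h | h
    · refine ⟨Additive.ofMul b, ?_⟩
      simp only
      rw [h, natCast_zsmul, ← ofMul_pow, hb]; rfl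
    · refine ⟨Additive.ofMul b⁻¹, ?_⟩
      simp only
      rw [h, neg_smul, natCast_zsmul, ← ofMul_pow, inv_pow, hb]
      simp
  letI : DivisibleBy (Additive ℂˣ) ℤ := divisibleByOfSMulRightSurj _ _ hsurj
  exact Module.Baer.of_divisible _

lemma split (hc : ∀ g h k : G, c g h * c (g * h) k = c h k * c g (h * k))
    (A : Subgroup G) (h1 : ∀ a ∈ A, ∀ b ∈ A, a * b = b * a)
    (h2 : ∀ a ∈ A, ∀ b ∈ A, c a b = c b a) :
    ∃ f : A → ℂˣ, ∀ a b : A, c (a : G) (b : G) = f a * f b * (f (a * b))⁻¹ := by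
  letI := cextGroup hc
  let S : Subgroup (CExt c) := A.comap (cextProj hc)
  letI : CommGroup S :=
    { (inferInstance : Group S) with
      mul_comm := by
        intro x y
        refine Subtype.ext (CExt.ext ?_ (h1 _ x.2 _ y.2))
        change x.1.z * y.1.z * c x.1.g y.1.g = y.1.z * x.1.z * c y.1.g x.1.g
        rw [h2 x.1.g x.2 y.1.g y.2, mul_comm x.1.z] }
  let ι : ℂˣ →* S := MonoidHom.mk' (fun z => ⟨⟨z * (c 1 1)⁻¹, 1⟩, A.one_mem⟩) (by
    intro z w
    refine Subtype.ext (CExt.ext ?_ (one_mul 1).symm)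
    change z * w * (c 1 1)⁻¹ = (z * (c 1 1)⁻¹) * (w * (c 1 1)⁻¹) * c 1 1
    simp [mul_assoc, mul_left_comm])
  have hι : Function.Injective ι := by
    intro z w h
    have : z * (c 1 1)⁻¹ = w * (c 1 1)⁻¹ := congrArg (fun s : S => s.1.z) h
    exact mul_right_cancel this
  obtain ⟨r, hr⟩ := baer.extension_property_addMonoidHom (MonoidHom.toAdditive ι) hι
    (AddMonoidHom.id (Additive ℂˣ))
  let r' : S →* ℂˣ := MonoidHom.toAdditive.symm r
  have hr' : ∀ z, r' (ι z) = z := fun z => DFunLike.congr_fun hr (Additive.ofMul z)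
  let s : A → S := fun a => ⟨⟨1, a⟩, a.2⟩
  refine ⟨fun a => r' (s a), fun a b => ?_⟩
  have key : s a * s b = ι (c a b) * s (a * b) := by
    refine Subtype.ext (CExt.ext ?_ (one_mul _).symm)
    change 1 * 1 * c (a : G) b = (c (a : G) b * (c 1 1)⁻¹) * 1 * c 1 (a * b : A)
    rw [c_one_left hc ((a * b : A) : G)]
    simp
  rw [eq_mul_inv_iff_mul_eq, ← map_mul, key, map_mul, hr']

lemma torsion (hc : ∀ g h k : G, c g h * c (g * h) k = c h k * c g (h * k)) (p : ℕ) (hp : 0 < p) :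
    letI := cextGroup hc
    {z : CExt c | cextProj hc z = 1 ∧ z ^ p = 1}.Finite ∧
    {z : CExt c | cextProj hc z = 1 ∧ z ^ p = 1}.ncard ≤ p := by
  letI := cextGroup hc
  set Z := {z : CExt c | cextProj hc z = 1 ∧ z ^ p = 1} with hZ
  have : NeZero p := ⟨hp.ne'⟩
  have hpow : ∀ (n : ℕ) (x : CExt c), x.g = 1 →
      (x ^ n).z * c 1 1 = (x.z * c 1 1) ^ n ∧ (x ^ n).g = 1 := by
    intro n x hx
    induction n with
    | zero =>
      rw [pow_zero, pow_zero]
      exact ⟨inv_mul_cancel _, rfl⟩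
    | succ n ih =>
      rw [pow_succ, pow_succ]
      refine ⟨?_, ?_⟩
      · change (x ^ n).z * x.z * c (x ^ n).g x.g * c 1 1 = _
        rw [ih.2, hx, ← ih.1]
        simp only [mul_assoc, mul_comm, mul_left_comm]
      · change (x ^ n).g * x.g = 1
        rw [ih.2, hx, one_mul]
  let φ : Z → rootsOfUnity p ℂ := fun x => ⟨x.1.z * c 1 1, by
    rw [mem_rootsOfUnity, ← (hpow p x.1 x.2.1).1, x.2.2]
    exact inv_mul_cancel _⟩
  have hφ : Function.Injective φ := by
    intro x y h
    have h1 : x.1.z * c 1 1 = y.1.z * c 1 1 := congrArg Subtype.val h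
    have hx : x.1.g = 1 := x.2.1
    have hy : y.1.g = 1 := y.2.1
    exact Subtype.ext (CExt.ext (mul_right_cancel h1) (hx.trans hy.symm))
  refine ⟨Finite.of_injective φ hφ, ?_⟩
  have := Nat.card_le_card_of_injective φ hφ
  rw [Nat.card_coe_set_eq] at this
  refine this.trans ?_
  exact card_rootsOfUnity ℂ p

lemma step [Finite G] (hc : ∀ g h k : G, c g h * c (g * h) k = c h k * c g (h * k))
    (p : ℕ) (hp : p.Prime) (m : ℕ) (hG : Nat.card G = p ^ m) (j : ℕ)
    (hj : j * (j + 1) / 2 + j < m)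
    (B : Subgroup G) (hBn : B.Normal) (hBc : ∀ a b : B, a * b = b * a)
    (hB : Nat.card B = p ^ j)
    (hf : ∃ f : B → ℂˣ, ∀ a b : B, c (a : G) (b : G) = f a * f b * (f (a * b))⁻¹) :
    ∃ A : Subgroup G, B ≤ A ∧ A.Normal ∧ (∀ a b : A, a * b = b * a) ∧
        Nat.card A = p ^ (j + 1) ∧
        ∃ f : A → ℂˣ, ∀ a b : A, c (a : G) (b : G) = f a * f b * (f (a * b))⁻¹ := by
  have : Fact p.Prime := ⟨hp⟩
  letI := cextGroup hc
  obtain ⟨hT, hTc⟩ := torsion hc p hp.pos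
  obtain ⟨f, hf⟩ := hf
  obtain ⟨A, hBA, hAn, hA, hAc⟩ := main_step m hG (cextProj hc) (fun g => ⟨⟨1, g⟩, rfl⟩)
    (by
      intro z x hz
      have hz : z.g = 1 := hz
      refine CExt.ext ?_ ?_
      · change z.z * x.z * c z.g x.g = x.z * z.z * c x.g z.g
        rw [hz, c_one_left hc x.g, c_one_right hc x.g, mul_comm z.z]
      · change z.g * x.g = x.g * z.g
        rw [hz]; simp)
    hT hTc B
    (by
      intro x y hx hy
      have h1 : x.g * y.g = y.g * x.g := congrArg Subtype.val (hBc ⟨x.g, hx⟩ ⟨y.g, hy⟩)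
      refine CExt.ext ?_ h1
      change x.z * y.z * c x.g y.g = y.z * x.z * c y.g x.g
      have e1 := hf ⟨x.g, hx⟩ ⟨y.g, hy⟩
      have e2 := hf ⟨y.g, hy⟩ ⟨x.g, hx⟩
      simp only at e1 e2
      rw [e1, e2, hBc ⟨x.g, hx⟩ ⟨y.g, hy⟩, mul_comm x.z, mul_comm (f ⟨x.g, hx⟩)])
    j hB hj
  have h1 : ∀ a ∈ A, ∀ b ∈ A, a * b = b * a := fun a ha b hb =>
    congrArg CExt.g (hA ⟨1, a⟩ ⟨1, b⟩ ha hb)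
  have h2 : ∀ a ∈ A, ∀ b ∈ A, c a b = c b a := by
    intro a ha b hb
    have : 1 * 1 * c a b = 1 * 1 * c b a := congrArg CExt.z (hA ⟨1, a⟩ ⟨1, b⟩ ha hb)
    simpa using this
  exact ⟨A, hBA, hAn, fun a b => Subtype.ext (h1 a a.2 b b.2), hAc, split hc A h1 h2⟩

end

end IsoAux


/-- Let `G` be a group of order `p^m` and `[c] ∈ H²(G, ℂ*)`. If
`(i² + i − 2)/2 < m` then `[c]` admits an isotropic normal abelian subgroup of
order `p^i`; moreover any normal abelian isotropic subgroup of order `p^{i-1}` is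
contained in a normal abelian isotropic subgroup of order `p^i`. -/
theorem normal_abelian_isotropic_subgroup
    {G : Type*} [Group G] [Fintype G] (p : ℕ) (hp : p.Prime) (m : ℕ)
    (hG : Fintype.card G = p ^ m)
    (c : G → G → ℂˣ)
    (hc : ∀ g h k : G, c g h * c (g * h) k = c h k * c g (h * k))
    (i : ℕ) (hi : i ^ 2 + i < 2 * m + 2) :
    (∃ A : Subgroup G, A.Normal ∧ (∀ a b : A, a * b = b * a) ∧
      Nat.card A = p ^ i ∧
      ∃ f : A → ℂˣ, ∀ a b : A, c (a : G) (b : G) = f a * f b * (f (a * b))⁻¹) ∧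
    (∀ B : Subgroup G, B.Normal → (∀ a b : B, a * b = b * a) →
      Nat.card B = p ^ (i - 1) →
      (∃ f : B → ℂˣ, ∀ a b : B, c (a : G) (b : G) = f a * f b * (f (a * b))⁻¹) →
      ∃ A : Subgroup G, B ≤ A ∧ A.Normal ∧ (∀ a b : A, a * b = b * a) ∧
        Nat.card A = p ^ i ∧
        ∃ f : A → ℂˣ, ∀ a b : A, c (a : G) (b : G) = f a * f b * (f (a * b))⁻¹) := by
  have hG' : Nat.card G = p ^ m := by rw [Nat.card_eq_fintype_card, hG]
  have harith : ∀ j : ℕ, (j + 1) ^ 2 + (j + 1) < 2 * m + 2 → j * (j + 1) / 2 + j < m := by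
    intro j hj
    have h1 : (j + 1) ^ 2 + (j + 1) = j * (j + 1) + 2 * j + 2 := by ring
    omega
  refine ⟨?_, ?_⟩
  · induction i with
    | zero =>
      refine ⟨⊥, inferInstance, fun a b => Subsingleton.elim _ _, by simp,
        fun _ => c 1 1, fun a b => ?_⟩
      have ha : (a : G) = 1 := Subgroup.mem_bot.1 a.2
      have hb : (b : G) = 1 := Subgroup.mem_bot.1 b.2
      rw [ha, hb]; simp
    | succ j ih =>
      obtain ⟨B, hBn, hBc, hB, hf⟩ := ih (by nlinarith)
      obtain ⟨A, -, hA⟩ := IsoAux.step hc p hp m hG' j (harith j hi) B hBn hBc hB hf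
      exact ⟨A, hA⟩
  · intro B hBn hBc hB hf
    cases i with
    | zero => exact ⟨B, le_rfl, hBn, hBc, hB, hf⟩
    | succ j => exact IsoAux.step hc p hp m hG' j (harith j hi) B hBn hBc hB hf
end

section
/- Let G be a finite group of order p^{2n} with n < 4, p prime, and [c] ∈ H²(G, ℂ*) any cohomology class. Then [c] admits a normal (abelian) isotropic subgroup of order p^n. Consequently, every non-degenerate class on a nilpotent group whose order is free of eighth powers admits a normal Lagrangian. -/
namespace NIS

/-- A central extension of `G` by `ℂˣ` with a section realising the cocycle `c`. -/
structure CExt (G : Type) [Group G] (c : G → G → ℂˣ) where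
  Γ : Type
  inst : Group Γ
  π : Γ →* G
  ι : ℂˣ →* Γ
  s : G → Γ
  ι_inj : Function.Injective ι
  ker_iff : ∀ x, π x = 1 ↔ ∃ z, ι z = x
  central : ∀ z x, ι z * x = x * ι z
  π_s : ∀ g, π (s g) = g
  s_mul : ∀ a b, s a * s b = ι (c a b) * s (a * b)

attribute [instance] CExt.inst

/-- underlying type of the extension -/
structure Tw (G : Type) (c : G → G → ℂˣ) where
  z : ℂˣ
  g : G

variable {G : Type} [Group G] {c : G → G → ℂˣ}

lemma c_one_left (hc : ∀ g h k : G, c g h * c (g * h) k = c h k * c g (h * k)) (g : G) :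
    c 1 g = c 1 1 := by
  have := hc 1 1 g
  simp only [one_mul] at this
  exact (mul_right_cancel this).symm

lemma c_one_right (hc : ∀ g h k : G, c g h * c (g * h) k = c h k * c g (h * k)) (g : G) :
    c g 1 = c 1 1 := by
  have := hc g 1 1
  simp only [mul_one] at this
  exact mul_right_cancel this

/-- the group structure -/
@[reducible] def twGroup (hc : ∀ g h k : G, c g h * c (g * h) k = c h k * c g (h * k)) :
    Group (Tw G c) :=
  letI : Mul (Tw G c) := ⟨fun x y => ⟨x.z * y.z * c x.g y.g, x.g * y.g⟩⟩
  letI : One (Tw G c) := ⟨⟨(c 1 1)⁻¹, 1⟩⟩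
  letI : Inv (Tw G c) := ⟨fun x => ⟨x.z⁻¹ * (c 1 1)⁻¹ * (c x.g⁻¹ x.g)⁻¹, x.g⁻¹⟩⟩
  Group.ofLeftAxioms
    (by
      rintro ⟨a, g⟩ ⟨b, h⟩ ⟨d, k⟩
      change Tw.mk _ _ = Tw.mk _ _
      congr 1
      · change a * b * c g h * d * c (g * h) k = a * (b * d * c h k) * c g (h * k)
        calc _ = a * b * d * (c g h * c (g * h) k) := by ac_rfl
          _ = a * b * d * (c h k * c g (h * k)) := by rw [hc]
          _ = _ := by ac_rfl
      · exact mul_assoc g h k)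
    (by
      rintro ⟨a, g⟩
      change Tw.mk _ _ = Tw.mk _ _
      congr 1
      · change (c 1 1)⁻¹ * a * c 1 g = a
        rw [c_one_left hc g]
        rw [mul_right_comm]; simp
      · exact one_mul g)
    (by
      rintro ⟨a, g⟩
      change Tw.mk _ _ = Tw.mk _ _
      congr 1
      · change a⁻¹ * (c 1 1)⁻¹ * (c g⁻¹ g)⁻¹ * a * c g⁻¹ g = (c 1 1)⁻¹
        calc _ = (a⁻¹ * a) * ((c g⁻¹ g)⁻¹ * c g⁻¹ g) * (c 1 1)⁻¹ := by ac_rfl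
          _ = _ := by simp
      · exact inv_mul_cancel g)

lemma exists_cext (hc : ∀ g h k : G, c g h * c (g * h) k = c h k * c g (h * k)) :
    Nonempty (CExt G c) := by
  let := twGroup hc
  have hmul : ∀ x y : Tw G c, x * y = ⟨x.z * y.z * c x.g y.g, x.g * y.g⟩ := fun _ _ => rfl
  have hone : (1 : Tw G c) = ⟨(c 1 1)⁻¹, 1⟩ := rfl
  refine ⟨{ Γ := Tw G c, inst := inferInstance
            π := { toFun := Tw.g, map_one' := rfl, map_mul' := fun _ _ => rfl }
            ι := { toFun := fun z => ⟨z * (c 1 1)⁻¹, 1⟩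
                   map_one' := by simp [hone]
                   map_mul' := ?_ }
            s := fun g => ⟨1, g⟩
            ι_inj := ?_, ker_iff := ?_, central := ?_, π_s := fun _ => rfl, s_mul := ?_ }⟩
  · intro x y
    simp only [hmul, mul_one, Tw.mk.injEq, and_true]
    calc _ = x * y * (c 1 1)⁻¹ * ((c 1 1)⁻¹ * c 1 1) := by simp
      _ = _ := by ac_rfl
  · intro x y h
    simpa using h
  · rintro ⟨a, g⟩
    constructor
    · intro h
      change g = 1 at h
      subst h
      exact ⟨a * c 1 1, by simp⟩
    · rintro ⟨z, h⟩
      rw [← h]; rfl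
  · rintro z ⟨a, g⟩
    change Tw.mk _ _ * Tw.mk _ _ = Tw.mk _ _ * Tw.mk _ _
    simp only [hmul, mul_one, one_mul, Tw.mk.injEq, and_true, c_one_left hc g, c_one_right hc g]
    ac_rfl
  · intro a b
    change _ = Tw.mk _ _ * Tw.mk _ _
    simp only [hmul, mul_one, one_mul, Tw.mk.injEq, and_true, c_one_left hc]
    simp

namespace CExt
variable (E : CExt G c)

lemma π_surj : Function.Surjective E.π := fun g => ⟨E.s g, E.π_s g⟩

lemma π_ι (z : ℂˣ) : E.π (E.ι z) = 1 := (E.ker_iff _).2 ⟨z, rfl⟩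

lemma ι_comm (x : E.Γ) (hx : E.π x = 1) (y : E.Γ) : x * y = y * x := by
  obtain ⟨z, rfl⟩ := (E.ker_iff x).1 hx
  exact E.central z y

/-- `A` is abelian-isotropic: its preimage is commutative. -/
def Iso (A : Subgroup G) : Prop := ∀ x y, E.π x ∈ A → E.π y ∈ A → x * y = y * x

lemma Iso.split {A : Subgroup G} (hA : E.Iso A) :
    ∃ f : A → ℂˣ, ∀ a b : A, c (a : G) (b : G) = f a * f b * (f (a * b))⁻¹ := by
  let B := A.comap E.π
  let : CommGroup B := { (inferInstance : Group B) with
    mul_comm := fun x y => Subtype.ext (hA x y x.2 y.2) }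
  have hι : ∀ z, E.ι z ∈ B := fun z => by
    change E.π (E.ι z) ∈ A
    rw [E.π_ι]; exact A.one_mem
  let j : ℂˣ →* B := { toFun := fun z => ⟨E.ι z, hι z⟩, map_one' := by ext; simp,
                       map_mul' := fun x y => by ext; simp }
  have hj : Function.Injective j := fun x y h => E.ι_inj (congrArg Subtype.val h)
  have hroot : ∀ n : ℕ, n ≠ 0 → Function.Surjective (fun x : ℂˣ => x ^ n) := by
    intro n hn x
    obtain ⟨y, hy⟩ := IsAlgClosed.exists_pow_nat_eq (x : ℂ) (Nat.pos_of_ne_zero hn)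
    have hy0 : y ≠ 0 := by
      rintro rfl
      rw [zero_pow hn] at hy
      exact x.ne_zero hy.symm
    exact ⟨Units.mk0 y hy0, by ext; simpa using hy⟩
  let : DivisibleBy (Additive ℂˣ) ℤ :=
    divisibleByOfSMulRightSurj _ _ (by
      intro n hn x
      obtain ⟨y, hy⟩ := hroot n.natAbs (by simpa using hn) x.toMul
      rcases Int.natAbs_eq n with h | h
      · refine ⟨Additive.ofMul y, ?_⟩
        rw [h]
        change Additive.ofMul (y ^ ((n.natAbs : ℤ))) = x
        rw [zpow_natCast]; exact congrArg Additive.ofMul hy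
      · refine ⟨Additive.ofMul y⁻¹, ?_⟩
        rw [h]
        change Additive.ofMul (y⁻¹ ^ (-(n.natAbs : ℤ))) = x
        rw [inv_zpow', neg_neg, zpow_natCast]; exact congrArg Additive.ofMul hy)
  obtain ⟨r, hr⟩ := (Module.Baer.of_divisible (Additive ℂˣ)).extension_property_addMonoidHom
    (MonoidHom.toAdditive j) hj (AddMonoidHom.id _)
  let r' : B →* ℂˣ := MonoidHom.toAdditive.symm r
  have hr' : ∀ z, r' (j z) = z := fun z => DFunLike.congr_fun hr (Additive.ofMul z)
  let t : A → B := fun a => ⟨E.s a, by change E.π _ ∈ A; rw [E.π_s]; exact a.2⟩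
  refine ⟨fun a => r' (t a), fun a b => ?_⟩
  rw [← map_mul]
  have : t a * t b = j (c a b) * t (a * b) := Subtype.ext (E.s_mul a b)
  rw [this, map_mul, hr']
  simp

/-- Coprime commuting elements have commuting lifts. -/
lemma coprime_comm (x y : E.Γ) (m n : ℕ) (hmn : m.Coprime n) (hx : E.π x ^ m = 1)
    (hy : E.π y ^ n = 1) (h : E.π x * E.π y = E.π y * E.π x) : x * y = y * x := by
  obtain ⟨z, hz⟩ := (E.ker_iff (x * y * x⁻¹ * y⁻¹)).1 (by simp [h])
  have h1 : x * y * x⁻¹ = E.ι z * y := by rw [hz]; group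
  have h2 : y⁻¹ * x * y = E.ι z * x := by
    have : x * y = E.ι z * y * x := by rw [← h1]; group
    rw [mul_assoc, this, ← mul_assoc, ← mul_assoc, ← E.central, mul_assoc (E.ι z)]; simp
  have c1 : ∀ k : ℕ, x ^ k * y * (x ^ k)⁻¹ = E.ι z ^ k * y := by
    intro k
    induction k with
    | zero => simp
    | succ k ih =>
      calc _ = x * (x ^ k * y * (x ^ k)⁻¹) * x⁻¹ := by rw [pow_succ']; group
        _ = E.ι z ^ k * (x * y * x⁻¹) := by
          rw [ih, ← map_pow, ← mul_assoc, ← E.central]; group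
        _ = _ := by rw [h1, pow_succ]; group
  have c2 : ∀ k : ℕ, (y ^ k)⁻¹ * x * y ^ k = E.ι z ^ k * x := by
    intro k
    induction k with
    | zero => simp
    | succ k ih =>
      calc _ = y⁻¹ * ((y ^ k)⁻¹ * x * (y ^ k)) * y := by rw [pow_succ]; group
        _ = E.ι z ^ k * (y⁻¹ * x * y) := by
          rw [ih, ← map_pow, ← mul_assoc, ← E.central]; group
        _ = _ := by rw [h2, pow_succ]; group
  have d1 : E.ι z ^ m = 1 := by
    have e := c1 m
    rw [E.ι_comm (x ^ m) (by simpa using hx) y] at e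
    simpa using e
  have d2 : E.ι z ^ n = 1 := by
    have e := c2 n
    rw [mul_assoc, ← E.ι_comm (y ^ n) (by simpa using hy) x] at e
    simpa using e
  have : E.ι z = 1 := by
    have := Nat.dvd_gcd (orderOf_dvd_of_pow_eq_one d1) (orderOf_dvd_of_pow_eq_one d2)
    rw [hmn.gcd_eq_one] at this
    exact orderOf_eq_one_iff.1 (Nat.dvd_one.1 this)
  rw [this, one_mul] at h1
  nth_rewrite 2 [← h1]
  group


/-- A nontrivial normal subgroup of a finite `p`-group contains a central element of order `p`. -/
lemma exists_central {Q : Type*} [Group Q] [Finite Q] {p : ℕ} (hp : p.Prime) (hQ : IsPGroup p Q)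
    (N : Subgroup Q) (hN : N.Normal) (h : N ≠ ⊥) :
    ∃ y ∈ N, orderOf y = p ∧ y ∈ Subgroup.center Q := by
  have : Fact p.Prime := ⟨hp⟩
  let Z := N ⊓ Subgroup.center Q
  have hZ : Z ≠ ⊥ := by
    have hQ' : IsPGroup p (ConjAct Q) := hQ
    have hdvd : p ∣ Nat.card N := by
      rcases (hQ.to_subgroup N).card_eq_or_dvd with h1 | h1
      · exact absurd (Subgroup.card_eq_one.1 h1) h
      · exact h1
    obtain ⟨b, hb, hb1⟩ := hQ'.exists_fixed_point_of_prime_dvd_card_of_fixed_point N hdvd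
      (a := (1 : N)) (fun g => by ext; simp)
    intro hbot
    have : (b : Q) ∈ Z := by
      refine ⟨b.2, Subgroup.mem_center_iff.2 fun g => ?_⟩
      have := congrArg Subtype.val (hb (ConjAct.toConjAct g))
      have h2 : g * (b : Q) * g⁻¹ = b := this
      exact mul_inv_eq_iff_eq_mul.1 h2
    rw [hbot, Subgroup.mem_bot] at this
    exact hb1 (Subtype.ext this.symm)
  have hdvd : p ∣ Nat.card Z := by
    rcases (hQ.to_subgroup Z).card_eq_or_dvd with h1 | h1
    · exact absurd (Subgroup.card_eq_one.1 h1) hZ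
    · exact h1
  obtain ⟨y, hy⟩ := exists_prime_orderOf_dvd_card' p hdvd
  exact ⟨y, y.2.1, by simpa using hy, y.2.2⟩

lemma card_torsion [Finite G] {p m : ℕ} (hp : p.Prime) (A : Subgroup G) (hA : E.Iso A)
    (hcard : Nat.card A = p ^ m) :
    Finite {b : E.Γ // E.π b ∈ A ∧ b ^ p = 1} ∧
      Nat.card {b : E.Γ // E.π b ∈ A ∧ b ^ p = 1} ≤ p ^ (m + 1) := by
  classical
  have : NeZero p := ⟨hp.ne_zero⟩
  let T := {b : E.Γ // E.π b ∈ A ∧ b ^ p = 1}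
  have : Nonempty T := ⟨⟨1, by simp, by simp⟩⟩
  let q : T → A := fun t => ⟨E.π t.1, t.2.1⟩
  let r : A → T := Function.invFun (α := T) q
  have hr : ∀ t, q (r (q t)) = q t := fun t => Function.invFun_eq (f := q) ⟨t, rfl⟩
  have key : ∀ t : T, ∃ z : rootsOfUnity p ℂ, E.ι (z : ℂˣ) = ((r (q t)).1)⁻¹ * t.1 := by
    intro t
    have hk : E.π (((r (q t)).1)⁻¹ * t.1) = 1 := by
      have := congrArg Subtype.val (hr t)
      change E.π (r (q t)).1 = E.π t.1 at this
      simp [this]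
    obtain ⟨z, hz⟩ := (E.ker_iff _).1 hk
    refine ⟨⟨z, ?_⟩, hz⟩
    rw [mem_rootsOfUnity]
    apply E.ι_inj
    have hcm : Commute ((r (q t)).1)⁻¹ t.1 :=
      Commute.inv_left (hA _ _ (r (q t)).2.1 t.2.1)
    rw [map_pow, hz, hcm.mul_pow, inv_pow, (r (q t)).2.2, t.2.2]
    simp
  choose z hz using key
  let F : T → A × rootsOfUnity p ℂ := fun t => (q t, z t)
  have hF : Function.Injective F := by
    intro t u h
    have h1 : q t = q u := congrArg Prod.fst h
    have h2 : z t = z u := congrArg Prod.snd h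
    have e1 := hz t
    have e2 := hz u
    rw [h1, h2, e2] at e1
    exact Subtype.ext (mul_left_cancel e1).symm
  refine ⟨Finite.of_injective F hF, (Nat.card_le_card_of_injective F hF).trans ?_⟩
  rw [Nat.card_prod, hcard, pow_succ]
  exact Nat.mul_le_mul_left _ (card_rootsOfUnity ℂ p)

/-- centralizer of the preimage of `A` -/
def Cen (A : Subgroup G) : Subgroup E.Γ := Subgroup.centralizer (A.comap E.π : Set E.Γ)

lemma mem_Cen {A : Subgroup G} {g : E.Γ} : g ∈ E.Cen A ↔ ∀ b, E.π b ∈ A → b * g = g * b := by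
  rw [Cen, Subgroup.mem_centralizer_iff]; rfl

lemma step [Finite G] {p m k i : ℕ} (hp : p.Prime) (hG : Nat.card G = p ^ k)
    (A : Subgroup G) (hn : A.Normal) (hA : E.Iso A) (hcard : Nat.card A = p ^ m)
    (hidx : (E.Cen A).index ≤ p ^ i) (hlt : m + i < k) :
    ∃ A' : Subgroup G, A'.Normal ∧ E.Iso A' ∧ Nat.card A' = p ^ (m + 1) ∧
      (E.Cen A').index ≤ p ^ (i + (m + 1)) := by
  have : Fact p.Prime := ⟨hp⟩
  have hker : E.π.ker ≤ E.Cen A := fun x hx => E.mem_Cen.2 fun b _ =>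
    (E.ι_comm x hx b).symm
  have hCn : (E.Cen A).Normal := by
    have : (A.comap E.π).Normal := hn.comap _
    exact Subgroup.normal_centralizer
  let D := (E.Cen A).map E.π
  have hDn : D.Normal := hCn.map _ E.π_surj
  have hDidx : D.index = (E.Cen A).index := Subgroup.index_map_eq _ E.π_surj hker
  have hDmem : ∀ x, E.π x ∈ D → x ∈ E.Cen A := by
    intro x hx
    have : x ∈ D.comap E.π := hx
    rwa [Subgroup.comap_map_eq_self hker] at this
  have hnot : ¬ D ≤ A := by
    intro hle
    have h1 : Nat.card D ≤ p ^ m := hcard ▸ Nat.card_mono (Set.toFinite _) hle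
    have h2 := D.card_mul_index
    rw [hG, hDidx] at h2
    have h3 : p ^ k ≤ p ^ (m + i) := by
      rw [← h2, pow_add]; exact Nat.mul_le_mul h1 hidx
    have := (Nat.pow_le_pow_iff_right hp.one_lt).1 h3
    omega
  have hPG : IsPGroup p G := IsPGroup.of_card hG
  let mk := QuotientGroup.mk' A
  obtain ⟨y, hyD, hyo, hyc⟩ := exists_central hp (hPG.to_quotient A) (D.map mk)
    (hDn.map _ (QuotientGroup.mk'_surjective A)) (by
      intro hb
      rw [Subgroup.map_eq_bot_iff, QuotientGroup.ker_mk'] at hb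
      exact hnot hb)
  obtain ⟨x, hxD, rfl⟩ := hyD
  obtain ⟨w, hw⟩ := E.π_surj x
  have hwC : w ∈ E.Cen A := hDmem w (hw ▸ hxD)
  let A' := (Subgroup.zpowers (mk x)).comap mk
  have hzn : (Subgroup.zpowers (mk x)).Normal := by
    have : Subgroup.zpowers (mk x) ≤ Subgroup.center _ := by
      rwa [Subgroup.zpowers_le]
    refine ⟨fun n hn g => ?_⟩
    rw [Subgroup.mem_center_iff.1 (this hn) g, mul_inv_cancel_right]
    exact hn
  have hdec : ∀ g, E.π g ∈ A' → ∃ (j : ℤ) (b : E.Γ), E.π b ∈ A ∧ g = w ^ j * b := by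
    intro g hg
    obtain ⟨j, hj⟩ := Subgroup.mem_zpowers_iff.1 (show mk (E.π g) ∈ Subgroup.zpowers (mk x) from hg)
    refine ⟨j, (w ^ j)⁻¹ * g, ?_, by simp⟩
    rw [map_mul, map_inv, map_zpow, hw, ← QuotientGroup.eq]
    rw [← map_zpow] at hj
    exact hj
  have hwb : ∀ b, E.π b ∈ A → Commute b w := fun b hb => E.mem_Cen.1 hwC b hb
  have hcardA' : Nat.card A' = p ^ (m + 1) := by
    have h1 : A'.index = (Subgroup.zpowers (mk x)).index :=
      Subgroup.index_comap_of_surjective _ (QuotientGroup.mk'_surjective A)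
    have h2 := A'.card_mul_index
    have h3 := (Subgroup.zpowers (mk x)).card_mul_index
    have h4 := A.card_mul_index
    rw [Nat.card_zpowers, hyo] at h3
    rw [h1] at h2
    have h5 : Nat.card (G ⧸ A) = A.index := rfl
    rw [h5] at h3
    rw [← h3, ← h2, hcard, ← mul_assoc, ← pow_succ] at h4
    refine (Nat.eq_of_mul_eq_mul_right ?_ h4).symm
    exact Nat.pos_of_ne_zero Subgroup.index_ne_zero_of_finite
  have hAA' : A ≤ A' := by
    intro a ha
    change mk a ∈ Subgroup.zpowers (mk x)
    have : mk a = 1 := (QuotientGroup.eq_one_iff a).2 ha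
    rw [this]; exact Subgroup.one_mem _
  refine ⟨A', hzn.comap _, ?_, hcardA', ?_⟩
  · intro g h hg hh
    obtain ⟨j, b, hb, rfl⟩ := hdec g hg
    obtain ⟨l, d, hd, rfl⟩ := hdec h hh
    have c1 : Commute (w ^ j) (w ^ l) := (Commute.refl w).zpow_zpow j l
    have c2 : Commute (w ^ j) d := ((hwb d hd).symm).zpow_left j
    have c3 : Commute b (w ^ l) := (hwb b hb).zpow_right l
    have c4 : Commute b d := hA b d hb hd
    exact (c1.mul_right c2).mul_left (c3.mul_right c4)
  · have hle : E.Cen A' ≤ E.Cen A := fun g hg =>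
      E.mem_Cen.2 fun b hb => E.mem_Cen.1 hg b (hAA' hb)
    have hwA' : E.π w ∈ A' := by
      rw [hw]; exact Subgroup.mem_zpowers (mk x)
    have hwp : E.π (w ^ p) ∈ A := by
      rw [map_pow, hw, ← QuotientGroup.eq_one_iff]
      have := pow_orderOf_eq_one (mk x)
      rw [hyo, ← map_pow] at this
      exact this
    rw [← Subgroup.relIndex_mul_index hle, pow_add, mul_comm (p ^ i)]
    refine Nat.mul_le_mul ?_ hidx
    obtain ⟨hfin, hT⟩ := E.card_torsion hp A hA hcard
    refine le_trans ?_ hT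
    have hval : ∀ g : E.Γ, g ∈ E.Cen A → E.π (g * w * g⁻¹ * w⁻¹) ∈ A ∧
        (g * w * g⁻¹ * w⁻¹) ^ p = 1 := by
      intro g hg
      have hmem : E.π (g * w * g⁻¹ * w⁻¹) ∈ A := by
        simp only [map_mul, map_inv, hw]
        rw [← QuotientGroup.eq_one_iff]
        have h1 : mk (E.π g) * mk x = mk x * mk (E.π g) := Subgroup.mem_center_iff.1 hyc _
        change mk (E.π g * x * (E.π g)⁻¹ * x⁻¹) = 1
        simp [h1]
      refine ⟨hmem, ?_⟩
      have hcm := hwb _ hmem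
      have h1 : (g * w * g⁻¹ * w⁻¹) ^ p * w ^ p = g * w ^ p * g⁻¹ := by
        rw [← hcm.mul_pow, inv_mul_cancel_right, conj_pow]
      rw [← E.mem_Cen.1 hg _ hwp, mul_inv_cancel_right] at h1
      simpa using h1
    let φ : E.Cen A → {b : E.Γ // E.π b ∈ A ∧ b ^ p = 1} := fun g =>
      ⟨g.1 * w * g.1⁻¹ * w⁻¹, hval g.1 g.2⟩
    let ψ : (E.Cen A) ⧸ (E.Cen A').subgroupOf (E.Cen A) → {b : E.Γ // E.π b ∈ A ∧ b ^ p = 1} :=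
      fun u => φ u.out
    have hψ : Function.Injective ψ := by
      intro u v huv
      rw [← QuotientGroup.out_eq' u, ← QuotientGroup.out_eq' v, QuotientGroup.eq,
        Subgroup.mem_subgroupOf]
      have h0 : (u.out).1 * w * (u.out).1⁻¹ * w⁻¹ = (v.out).1 * w * (v.out).1⁻¹ * w⁻¹ :=
        congrArg Subtype.val huv
      have h1 : (u.out).1 * w * (u.out).1⁻¹ = (v.out).1 * w * (v.out).1⁻¹ := mul_right_cancel h0
      have hmemC : ((u.out)⁻¹ * v.out : E.Cen A).1 ∈ E.Cen A := Subtype.property _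
      have h2 : Commute ((u.out)⁻¹ * v.out : E.Cen A).1 w := by
        change (u.out).1⁻¹ * (v.out).1 * w = w * ((u.out).1⁻¹ * (v.out).1)
        have h3 : (v.out).1 * w = (u.out).1 * w * (u.out).1⁻¹ * (v.out).1 := by
          rw [h1]; group
        rw [mul_assoc, h3]; group
      refine E.mem_Cen.2 fun b hb => ?_
      obtain ⟨j, d, hd, rfl⟩ := hdec b hb
      have h4 : Commute d ((u.out)⁻¹ * v.out : E.Cen A).1 := E.mem_Cen.1 hmemC d hd
      exact (h2.symm.zpow_left j).mul_left h4
    exact Nat.card_le_card_of_injective ψ hψ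

lemma core [Finite G] {p n : ℕ} (hp : p.Prime) (hn : n < 4) (hG : Nat.card G = p ^ (2 * n)) :
    ∃ A : Subgroup G, A.Normal ∧ E.Iso A ∧ Nat.card A = p ^ n := by
  have h0 : ∃ A : Subgroup G, A.Normal ∧ E.Iso A ∧ Nat.card A = p ^ 0 ∧
      (E.Cen A).index ≤ p ^ 0 := by
    refine ⟨⊥, inferInstance, ?_, by simp, ?_⟩
    · intro x y hx _
      exact E.ι_comm x (Subgroup.mem_bot.1 hx) y
    · have : E.Cen ⊥ = ⊤ := by
        rw [eq_top_iff]
        intro g _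
        exact E.mem_Cen.2 fun b hb => E.ι_comm b (Subgroup.mem_bot.1 hb) g
      rw [this]; simp
  obtain ⟨A0, a0, b0, c0, d0⟩ := h0
  obtain rfl | h1 : n = 0 ∨ 1 ≤ n := by omega
  · exact ⟨A0, a0, b0, c0⟩
  obtain ⟨A1, a1, b1, c1, d1⟩ := E.step hp hG A0 a0 b0 c0 d0 (by omega)
  obtain rfl | h2 : n = 1 ∨ 2 ≤ n := by omega
  · exact ⟨A1, a1, b1, c1⟩
  obtain ⟨A2, a2, b2, c2, d2⟩ := E.step hp hG A1 a1 b1 c1 d1 (by omega)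
  obtain rfl | h3 : n = 2 ∨ 3 ≤ n := by omega
  · exact ⟨A2, a2, b2, c2⟩
  obtain ⟨A3, a3, b3, c3, d3⟩ := E.step hp hG A2 a2 b2 c2 d2 (by omega)
  obtain rfl : n = 3 := by omega
  exact ⟨A3, a3, b3, c3⟩

end CExt

section Square
open Matrix

/-- twisted left translations -/
noncomputable def M [DecidableEq G] (c : G → G → ℂˣ) (g : G) : Matrix G G ℂ :=
  Matrix.of fun x y => if x = g * y then (c g y : ℂ) else 0

variable [Fintype G] [DecidableEq G]

lemma M_mul (hc : ∀ g h k : G, c g h * c (g * h) k = c h k * c g (h * k)) (g h : G) :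
    M c g * M c h = (c g h : ℂ) • M c (g * h) := by
  ext x y
  rw [Matrix.mul_apply, Finset.sum_eq_single (h * y)]
  · have : (c g h : ℂ) * c (g * h) y = c h y * c g (h * y) := by exact_mod_cast hc g h y
    by_cases hx : x = g * (h * y)
    · simp [M, hx, mul_assoc, this, mul_comm]
    · simp [M, hx, mul_assoc]
  · intro z _ hz
    simp [M, hz]
  · simp

lemma M_one (hc : ∀ g h k : G, c g h * c (g * h) k = c h k * c g (h * k)) :
    M c 1 = (c 1 1 : ℂ) • (1 : Matrix G G ℂ) := by
  ext x y
  by_cases h : x = y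
  · subst h; simp [M, c_one_left hc x]
  · simp [M, h]

lemma trace_M_ne (g : G) (hg : g ≠ 1) : (M c g).trace = 0 := by
  simp [M, Matrix.trace, hg]

lemma trace_coeff (hc : ∀ g h k : G, c g h * c (g * h) k = c h k * c g (h * k)) (a : G → ℂ)
    (g : G) : ((∑ x, a x • M c x) * M c g⁻¹).trace =
      a g * ((c g g⁻¹ : ℂ) * (c 1 1 : ℂ) * Fintype.card G) := by
  rw [Finset.sum_mul, Matrix.trace_sum, Finset.sum_eq_single g]
  · rw [smul_mul_assoc, M_mul hc, mul_inv_cancel, M_one hc]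
    simp [mul_assoc]
  · intro x _ hx
    rw [smul_mul_assoc, M_mul hc, Matrix.trace_smul, Matrix.trace_smul, trace_M_ne]
    · simp
    · intro h; exact hx (mul_inv_eq_one.1 h)
  · simp

lemma coeff_inj (hc : ∀ g h k : G, c g h * c (g * h) k = c h k * c g (h * k)) (a b : G → ℂ)
    (h : ∑ x, a x • M c x = ∑ x, b x • M c x) : a = b := by
  funext g
  have h1 := trace_coeff hc a g
  rw [h, trace_coeff hc b g] at h1
  have : ((c g g⁻¹ : ℂ) * (c 1 1 : ℂ) * Fintype.card G) ≠ 0 := by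
    simp
  exact (mul_right_cancel₀ this h1).symm

theorem card_square (hc : ∀ g h k : G, c g h * c (g * h) k = c h k * c g (h * k))
    (hnd : ∀ x : G, x ≠ 1 → ∃ g : G, x * g = g * x ∧ c x g ≠ c g x) :
    ∃ d : ℕ, Fintype.card G = d ^ 2 := by
  let S : Submodule ℂ (Matrix G G ℂ) := Submodule.span ℂ (Set.range (M c))
  have hMS : ∀ g, M c g ∈ S := fun g => Submodule.subset_span ⟨g, rfl⟩
  have hone : (1 : Matrix G G ℂ) = ((c 1 1 : ℂ)⁻¹) • M c 1 := by
    rw [M_one hc, smul_smul]; simp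
  have hmulS : ∀ x y, x ∈ S → y ∈ S → x * y ∈ S := by
    intro x y hx hy
    induction hx using Submodule.span_induction with
    | mem x h =>
      obtain ⟨g, rfl⟩ := h
      induction hy using Submodule.span_induction with
      | mem y h =>
        obtain ⟨h, rfl⟩ := h
        rw [M_mul hc]; exact S.smul_mem _ (hMS _)
      | zero => simp
      | add y z _ _ h1 h2 => rw [mul_add]; exact S.add_mem h1 h2
      | smul a y _ h1 => rw [mul_smul_comm]; exact S.smul_mem _ h1
    | zero => simp
    | add y z _ _ h1 h2 => rw [add_mul]; exact S.add_mem h1 h2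
    | smul a y _ h1 => rw [smul_mul_assoc]; exact S.smul_mem _ h1
  let A : Subalgebra ℂ (Matrix G G ℂ) :=
    S.toSubalgebra (by rw [hone]; exact S.smul_mem _ (hMS 1)) hmulS
  have hA : ∀ t : Matrix G G ℂ, t ∈ A → ∃ a : G → ℂ, ∑ x, a x • M c x = t := fun t ht =>
    (Submodule.mem_span_range_iff_exists_fun ℂ).1 ht
  have hMA : ∀ g, M c g ∈ A := hMS
  have hne : Nonempty G := ⟨1⟩
  have hsimple : IsSimpleRing A := by
    rw [isSimpleRing_iff_isTwoSided_imp]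
    refine ⟨inferInstance, fun I hI => ?_⟩
    by_cases hbot : I = ⊥
    · exact Or.inl hbot
    right
    obtain ⟨t, htI, ht0⟩ := Submodule.exists_mem_ne_zero_of_ne_bot hbot
    obtain ⟨a, ha⟩ := hA t.1 t.2
    obtain ⟨g0, hg0⟩ : ∃ g, a g ≠ 0 := by
      by_contra! h
      apply ht0
      apply Subtype.ext
      rw [← ha]; simp [h]
    let u : A := t * ⟨M c g0⁻¹, hMA _⟩
    have huI : u ∈ I := Ideal.mul_mem_right _ I htI
    have hutr : u.1.trace ≠ 0 := by
      change (t.1 * M c g0⁻¹).trace ≠ 0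
      rw [← ha, trace_coeff hc]
      simp [hg0]
    let N : G → Matrix G G ℂ := fun h => ((c h h⁻¹ : ℂ) * (c 1 1 : ℂ))⁻¹ • M c h⁻¹
    have hNA : ∀ h, N h ∈ A := fun h => A.smul_mem (hMA _) _
    have hMN : ∀ h, M c h * N h = 1 := by
      intro h
      change M c h * (_ • _) = 1
      rw [mul_smul_comm, M_mul hc, mul_inv_cancel, M_one hc, smul_smul, smul_smul]
      simp
    have hNM : ∀ h, N h * M c h = 1 := fun h => mul_eq_one_comm.1 (hMN h)
    clear_value N
    let T : A := ∑ h, ⟨M c h, hMA h⟩ * u * ⟨N h, hNA h⟩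
    have hTI : T ∈ I := I.sum_mem fun h _ =>
      Ideal.mul_mem_right _ I (I.mul_mem_left _ huI)
    have hT : T.1 = ∑ h, M c h * u.1 * N h := by
      simp [T]
    have hTtr : T.1.trace = Fintype.card G * u.1.trace := by
      rw [hT, Matrix.trace_sum, Finset.sum_congr rfl (g := fun _ => u.1.trace)]
      · simp
      · intro h _
        rw [Matrix.trace_mul_comm, ← mul_assoc, hNM, one_mul]
    have hT0 : T.1.trace ≠ 0 := by rw [hTtr]; simp [hutr]
    have hTc : ∀ g, M c g * T.1 = T.1 * M c g := by
      intro g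
      rw [hT, Finset.mul_sum, Finset.sum_mul]
      refine Fintype.sum_equiv (Equiv.mulLeft g) _ _ fun h => ?_
      have e : N (g * h) * M c g = (c g h : ℂ) • N h := by
        calc N (g * h) * M c g = N (g * h) * (M c g * M c h) * N h := by
              rw [mul_assoc, mul_assoc, hMN, mul_one]
          _ = _ := by rw [M_mul hc, mul_smul_comm, hNM, smul_mul_assoc, one_mul]
      change _ = M c (g * h) * u.1 * N (g * h) * M c g
      rw [mul_assoc _ (N (g * h)), e, mul_assoc (M c h), ← mul_assoc (M c g), M_mul hc]
      simp [mul_assoc]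
    obtain ⟨b, hb⟩ := hA T.1 T.2
    have hb0 : ∀ x, x ≠ 1 → b x = 0 := by
      intro x hx
      obtain ⟨g, hgx, hcg⟩ := hnd x hx
      have h1 : M c g * T.1 = ∑ z, (b (g⁻¹ * z) * c g (g⁻¹ * z)) • M c z := by
        rw [← hb, Finset.mul_sum]
        refine Fintype.sum_equiv (Equiv.mulLeft g) _ _ fun h => ?_
        rw [mul_smul_comm, M_mul hc]
        simp [smul_smul]
      have h2 : T.1 * M c g = ∑ z, (b (z * g⁻¹) * c (z * g⁻¹) g) • M c z := by
        rw [← hb, Finset.sum_mul]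
        refine Fintype.sum_equiv (Equiv.mulRight g) _ _ fun h => ?_
        rw [smul_mul_assoc, M_mul hc]
        simp [smul_smul]
      have h3 := hTc g
      rw [h1, h2] at h3
      have h4 := congrFun (coeff_inj hc _ _ h3) (g * x)
      simp only [inv_mul_cancel_left] at h4
      rw [← hgx, mul_inv_cancel_right] at h4
      by_contra hbx
      exact hcg (Units.ext (mul_left_cancel₀ hbx h4)).symm
    have hTs : T.1 = (b 1 * c 1 1) • (1 : Matrix G G ℂ) := by
      rw [← hb, Finset.sum_eq_single 1, M_one hc, smul_smul]
      · intro x _ hx; rw [hb0 x hx, zero_smul]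
      · simp
    have hk : b 1 * c 1 1 ≠ 0 := by
      intro h
      rw [hTs, h] at hT0
      simp at hT0
    rw [Ideal.eq_top_iff_one]
    have : (1 : A) = algebraMap ℂ A (b 1 * c 1 1)⁻¹ * T := by
      apply Subtype.ext
      change (1 : Matrix G G ℂ) = algebraMap ℂ (Matrix G G ℂ) (b 1 * c 1 1)⁻¹ * T.1
      rw [hTs, ← Algebra.smul_def, smul_smul, inv_mul_cancel₀ hk, one_smul]
    rw [this]
    exact I.mul_mem_left _ hTI
  obtain ⟨d, _, ⟨e⟩⟩ := IsSimpleRing.exists_algEquiv_matrix_of_isAlgClosed ℂ A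
  refine ⟨d, ?_⟩
  have h1 : Module.finrank ℂ A = Fintype.card G := by
    change Module.finrank ℂ S = _
    refine finrank_span_eq_card (Fintype.linearIndependent_iff.2 fun a ha => ?_)
    have := coeff_inj hc a 0 (by simpa using ha)
    intro i; rw [this]; rfl
  have h2 := e.toLinearEquiv.finrank_eq
  rw [h1, Module.finrank_matrix] at h2
  simpa [pow_two] using h2

end Square

namespace CExt

lemma iso_iff (E : CExt G c) (A : Subgroup G) :
    E.Iso A ↔ ∀ a ∈ A, ∀ b ∈ A, a * b = b * a ∧ c a b = c b a := by
  constructor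
  · intro h a ha b hb
    have h1 := h (E.s a) (E.s b) (by rwa [E.π_s]) (by rwa [E.π_s])
    have h2 : a * b = b * a := by
      have := congrArg E.π h1
      simpa [E.π_s] using this
    refine ⟨h2, ?_⟩
    rw [E.s_mul, E.s_mul, h2] at h1
    exact E.ι_inj (mul_right_cancel h1)
  · intro h x y hx hy
    have dec : ∀ x : E.Γ, ∃ z, x = E.ι z * E.s (E.π x) := by
      intro x
      obtain ⟨z, hz⟩ := (E.ker_iff (x * (E.s (E.π x))⁻¹)).1 (by simp [E.π_s])
      exact ⟨z, by rw [hz]; simp⟩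
    obtain ⟨z, hz⟩ := dec x
    obtain ⟨w, hw⟩ := dec y
    obtain ⟨h1, h2⟩ := h _ hx _ hy
    have h3 : Commute (E.s (E.π x)) (E.s (E.π y)) := by
      change _ * _ = _ * _
      rw [E.s_mul, E.s_mul, h1, h2]
    have cz : ∀ z x, Commute (E.ι z) x := E.central
    rw [hz, hw]
    exact ((cz z _).mul_left ((cz w _).symm.mul_right h3))

end CExt

lemma subgroup_eq_top [Finite G] (N : Subgroup G)
    (h : ∀ r : ℕ, ∀ _ : Fact r.Prime, ∃ P : Sylow r G, (P : Subgroup G) ≤ N) : N = ⊤ := by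
  apply Subgroup.eq_top_of_card_eq
  apply Nat.dvd_antisymm N.card_subgroup_dvd_card
  rw [← Nat.factorization_prime_le_iff_dvd Nat.card_pos.ne' Nat.card_pos.ne']
  intro r hr
  have : Fact r.Prime := ⟨hr⟩
  obtain ⟨P, hP⟩ := h r this
  rw [← hr.pow_dvd_iff_le_factorization Nat.card_pos.ne', ← P.card_eq_multiplicity]
  exact Subgroup.card_dvd_of_le hP

lemma local_lagrangian [Finite G]
    (hc : ∀ g h k : G, c g h * c (g * h) k = c h k * c g (h * k)) (E : CExt G c)
    (hnil : Group.IsNilpotent G) (q n : ℕ) (hq : q.Prime) (hn : n < 4)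
    (hcard : (Nat.card G).factorization q = 2 * n) :
    ∃ A : Subgroup G, A.Normal ∧ E.Iso A ∧ Nat.card A = q ^ n := by
  have : Fact q.Prime := ⟨hq⟩
  have hnorm := ((Group.isNilpotent_of_finite_tfae (G := G)).out 0 3).1 hnil
  let P : Sylow q G := default
  have hPc : Nat.card (P : Subgroup G) = q ^ (2 * n) := by
    rw [← hcard]; exact P.card_eq_multiplicity
  let c' : ↥(P : Subgroup G) → ↥(P : Subgroup G) → ℂˣ := fun a b => c a b
  obtain ⟨E'⟩ := exists_cext (c := c') (fun g h k => hc g h k)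
  obtain ⟨A', hA'n, hA'i, hA'c⟩ := E'.core hq hn hPc
  refine ⟨A'.map (P : Subgroup G).subtype, ?_, ?_, ?_⟩
  · have hle : A'.map (P : Subgroup G).subtype ≤ P := Subgroup.map_subtype_le A'
    rw [← Subgroup.normalizer_eq_top_iff]
    apply subgroup_eq_top
    intro r hr
    by_cases hrq : r = q
    · subst hrq
      refine ⟨P, fun g hg => ?_⟩
      rw [Subgroup.mem_normalizer_iff]
      have key : ∀ g ∈ (P : Subgroup G), ∀ a ∈ A'.map (P : Subgroup G).subtype,
          g * a * g⁻¹ ∈ A'.map (P : Subgroup G).subtype := by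
        rintro g hg _ ⟨a, ha, rfl⟩
        exact ⟨⟨g, hg⟩ * a * ⟨g, hg⟩⁻¹, hA'n.conj_mem a ha _, rfl⟩
      intro a
      refine ⟨key g hg a, fun h => ?_⟩
      have := key g⁻¹ (inv_mem hg) _ h
      simpa [mul_assoc] using this
    · let R : Sylow r G := default
      refine ⟨R, fun g hg => ?_⟩
      rw [Subgroup.mem_normalizer_iff]
      have hdis : Disjoint (R : Subgroup G) (P : Subgroup G) :=
        IsPGroup.disjoint_of_ne r q hrq _ _ R.isPGroup' P.isPGroup'
      have hcm : ∀ a ∈ (P : Subgroup G), g * a = a * g := fun a ha =>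
        Subgroup.commute_of_normal_of_disjoint _ _ (hnorm r hr R) (hnorm q this P) hdis g a hg ha
      intro a
      constructor
      · intro ha
        rw [hcm a (hle ha), mul_inv_cancel_right]; exact ha
      · intro h
        have h1 := hcm _ (hle h)
        have h2 : g * a * g⁻¹ = a := by
          have : g * (g * a * g⁻¹) = g * a := by rw [h1]; group
          exact mul_left_cancel this
        rwa [h2] at h
  · rw [CExt.iso_iff] at hA'i ⊢
    rintro _ ⟨a, ha, rfl⟩ _ ⟨b, hb, rfl⟩
    obtain ⟨h1, h2⟩ := hA'i a ha b hb
    exact ⟨congrArg Subtype.val h1, h2⟩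
  · rw [Subgroup.card_map_of_injective (Subgroup.subtype_injective _), hA'c]

lemma card_sup_of_coprime [Finite G] (A B : Subgroup G) [B.Normal]
    (hco : (Nat.card A).Coprime (Nat.card B)) :
    Nat.card (A ⊔ B : Subgroup G) = Nat.card A * Nat.card B := by
  have hdis : Disjoint A B := Subgroup.disjoint_of_coprime_natCard hco
  rw [← Nat.card_prod]
  refine (Nat.card_eq_of_bijective (fun ab : A × B =>
    (⟨ab.1.1 * ab.2.1, mul_mem (Subgroup.mem_sup_left ab.1.2) (Subgroup.mem_sup_right ab.2.2)⟩ :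
      (A ⊔ B : Subgroup G))) ⟨?_, ?_⟩).symm
  · intro x y h
    exact Subgroup.mul_injective_of_disjoint hdis (congrArg Subtype.val h)
  · rintro ⟨x, hx⟩
    obtain ⟨a, ha, b, hb, rfl⟩ := Subgroup.mem_sup_of_normal_right.1 hx
    exact ⟨(⟨a, ha⟩, ⟨b, hb⟩), rfl⟩

theorem part_two [Fintype G] (hnil : Group.IsNilpotent G)
    (h8 : ∀ q : ℕ, q.Prime → ¬ q ^ 8 ∣ Fintype.card G)
    (hc : ∀ g h k : G, c g h * c (g * h) k = c h k * c g (h * k))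
    (hnd : ∀ x : G, x ≠ 1 → ∃ g : G, x * g = g * x ∧ c x g ≠ c g x) (E : CExt G c) :
    ∃ A : Subgroup G, A.Normal ∧ (Nat.card A) ^ 2 = Fintype.card G ∧ E.Iso A := by
  classical
  obtain ⟨d, hd⟩ := card_square hc hnd
  have hd0 : d ≠ 0 := by
    rintro rfl
    exact Fintype.card_ne_zero (α := G) (by simpa using hd)
  have hv : ∀ q, (Nat.card G).factorization q = 2 * d.factorization q := by
    intro q
    rw [Nat.card_eq_fintype_card, hd, Nat.factorization_pow]; simp
  have hlt : ∀ q : ℕ, q.Prime → d.factorization q < 4 := by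
    intro q hq
    by_contra! h
    apply h8 q hq
    rw [hq.pow_dvd_iff_le_factorization Fintype.card_ne_zero, ← Nat.card_eq_fintype_card, hv]
    omega
  have main : ∀ S : Finset ℕ, (∀ q ∈ S, q.Prime) → ∃ A : Subgroup G, A.Normal ∧ E.Iso A ∧
      Nat.card A = ∏ q ∈ S, q ^ d.factorization q := by
    intro S
    induction S using Finset.induction_on with
    | empty =>
      intro _
      refine ⟨⊥, inferInstance, ?_, by simp⟩
      intro x y hx _
      exact E.ι_comm x (Subgroup.mem_bot.1 hx) y
    | insert r S hr ih =>
      intro hS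
      have hrp : r.Prime := hS r (Finset.mem_insert_self _ _)
      obtain ⟨A, hAn, hAi, hAc⟩ := ih fun q hq => hS q (Finset.mem_insert_of_mem hq)
      obtain ⟨B, hBn, hBi, hBc⟩ := local_lagrangian hc E hnil r _ hrp (hlt r hrp) (hv r)
      have hco : (Nat.card A).Coprime (Nat.card B) := by
        rw [hAc, hBc]
        refine Nat.Coprime.prod_left fun q hq => Nat.Coprime.pow _ _ ?_
        rw [Nat.coprime_primes (hS q (Finset.mem_insert_of_mem hq)) hrp]
        rintro rfl
        exact hr hq
      have hdis : Disjoint A B := Subgroup.disjoint_of_coprime_natCard hco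
      refine ⟨A ⊔ B, inferInstance, ?_, ?_⟩
      · have hAB : ∀ x y, E.π x ∈ A → E.π y ∈ B → Commute x y := by
          intro x y hx hy
          refine E.coprime_comm x y _ _ hco ?_ ?_
            (Subgroup.commute_of_normal_of_disjoint A B hAn hBn hdis _ _ hx hy)
          · exact orderOf_dvd_iff_pow_eq_one.1 (A.orderOf_dvd_natCard hx)
          · exact orderOf_dvd_iff_pow_eq_one.1 (B.orderOf_dvd_natCard hy)
        have dec : ∀ x, E.π x ∈ A ⊔ B → ∃ a b, E.π a ∈ A ∧ E.π b ∈ B ∧ x = a * b := by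
          intro x hx
          obtain ⟨a, ha, b, hb, hab⟩ := Subgroup.mem_sup_of_normal_right.1 hx
          refine ⟨E.s a, (E.s a)⁻¹ * x, by rwa [E.π_s], ?_, by simp⟩
          rw [map_mul, map_inv, E.π_s, ← hab]
          simpa using hb
        intro x y hx hy
        obtain ⟨a, b, ha, hb, rfl⟩ := dec x hx
        obtain ⟨a', b', ha', hb', rfl⟩ := dec y hy
        have c1 : Commute a a' := hAi _ _ ha ha'
        have c2 : Commute b b' := hBi _ _ hb hb'
        exact (c1.mul_right (hAB a b' ha hb')).mul_left
          ((hAB a' b ha' hb).symm.mul_right c2)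
      · rw [card_sup_of_coprime A B hco, hAc, hBc, Finset.prod_insert hr, mul_comm]
  obtain ⟨A, hAn, hAi, hAc⟩ := main d.primeFactors fun q hq => Nat.prime_of_mem_primeFactors hq
  refine ⟨A, hAn, ?_, hAi⟩
  rw [hd, hAc]
  congr 1
  exact Nat.prod_factorization_pow_eq_self hd0

end NIS

/-- For a group `G` of order `p^{2n}` with `n < 4` and any
`[c] ∈ H²(G, ℂ*)`, there is a normal isotropic subgroup of order `p^n`.
Consequently, every non-degenerate class on a finite nilpotent group whose order is
free of eighth powers admits a normal Lagrangian. -/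
theorem normal_isotropic_small_pgroup :
    (∀ (G : Type) (_ : Group G) (_ : Fintype G) (p n : ℕ), p.Prime → n < 4 →
      Fintype.card G = p ^ (2 * n) →
      ∀ c : G → G → ℂˣ,
        (∀ g h k : G, c g h * c (g * h) k = c h k * c g (h * k)) →
        ∃ A : Subgroup G, A.Normal ∧ Nat.card A = p ^ n ∧
          ∃ f : A → ℂˣ, ∀ a b : A, c (a : G) (b : G) = f a * f b * (f (a * b))⁻¹) ∧
    (∀ (G : Type) (_ : Group G) (_ : Fintype G), Group.IsNilpotent G →
      (∀ q : ℕ, q.Prime → ¬ q ^ 8 ∣ Fintype.card G) →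
      ∀ c : G → G → ℂˣ,
        (∀ g h k : G, c g h * c (g * h) k = c h k * c g (h * k)) →
        (∀ x : G, x ≠ 1 → ∃ g : G, x * g = g * x ∧ c x g ≠ c g x) →
        ∃ A : Subgroup G, A.Normal ∧ (Nat.card A) ^ 2 = Fintype.card G ∧
          ∃ f : A → ℂˣ, ∀ a b : A, c (a : G) (b : G) = f a * f b * (f (a * b))⁻¹) := by
  constructor
  · intro G _ _ p n hp hn hG c hc
    obtain ⟨E⟩ := NIS.exists_cext hc
    obtain ⟨A, h1, h2, h3⟩ := E.core hp hn (by rw [Nat.card_eq_fintype_card, hG])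
    exact ⟨A, h1, h3, h2.split⟩
  · intro G _ _ hnil h8 c hc hnd
    obtain ⟨E⟩ := NIS.exists_cext hc
    obtain ⟨A, h1, h2, h3⟩ := NIS.part_two hnil h8 hc hnd E
    exact ⟨A, h1, h2, h3.split⟩
end
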